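/- Let G be a finite group and p a prime divisor of |G| such that gcd(|G|, (p−1)(p²−1)⋯(pⁿ−1)) = 1 for some integer n ≥ 1. Suppose G has a Sylow p-subgroup P such that every n-maximal subgroup of P (if any exists) either has a p-nilpotent supplement in G or is 𝔘ₛ-quasinormal in G. Then G is p-nilpotent. -/

import Mathlib

open scoped Pointwise

universe u

/-- `M` is a maximal subgroup of `K` (within the subgroup lattice of the ambient group). -/
def IsMaximalIn {G : Type*} [Group G] (M K : Subgroup G) : Prop :=
  M < K ∧ ∀ L : Subgroup G, M < L → L ≤ K → L = K

/-- `P` is a Sylow `p`-subgroup of the subgroup `E`. -/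
def IsSylowIn {G : Type*} [Group G] (p : ℕ) (P E : Subgroup G) : Prop :=
  P ≤ E ∧ IsPGroup p P ∧ ¬ p ∣ (P.subgroupOf E).index

/-- `H` is s-permutable in `G`: it permutes with every Sylow subgroup of `G`. -/
def SPermutable {G : Type*} [Group G] (H : Subgroup G) : Prop :=
  ∀ q : ℕ, q.Prime → ∀ Q : Subgroup G, IsSylowIn q Q ⊤ →
    (H : Set G) * (Q : Set G) = (Q : Set G) * (H : Set G)

/-- `A/B` is a chief factor of the ambient group. -/
def IsChiefFactor {G : Type*} [Group G] (A B : Subgroup G) : Prop :=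
  A.Normal ∧ B.Normal ∧ B < A ∧ ∀ L : Subgroup G, L.Normal → B < L → L < A → False

/-- The 𝔘-hypercenter: the product of all normal subgroups `N` such that every chief
factor `A/B` with `A ≤ N` has prime order. -/
def UHypercenter (G : Type*) [Group G] : Subgroup G :=
  sSup {N : Subgroup G | N.Normal ∧
    ∀ A B : Subgroup G, IsChiefFactor A B → A ≤ N → (B.relIndex A).Prime}

/-- The 𝔖-hypercenter: the product of all normal subgroups `N` such that every chief
factor `A/B` with `A ≤ N` is abelian with `G/C_G(A/B)` soluble. -/
def SHypercenter (G : Type*) [Group G] : Subgroup G :=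
  sSup {N : Subgroup G | N.Normal ∧
    ∀ A B : Subgroup G, IsChiefFactor A B → A ≤ N →
      (∀ a ∈ A, ∀ b ∈ A, a * b * a⁻¹ * b⁻¹ ∈ B) ∧
      ∃ C : Subgroup G, ∃ _ : C.Normal,
        (∀ g : G, g ∈ C ↔ ∀ h ∈ A, g * h * g⁻¹ * h⁻¹ ∈ B) ∧ IsSolvable (G ⧸ C)}

/-- `H` is 𝔘ₛ-quasinormal in `G`. -/
def UsQuasinormal {G : Type*} [Group G] (H : Subgroup G) : Prop :=
  ∃ T : Subgroup G, T.Normal ∧ SPermutable (H ⊔ T) ∧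
    ∀ x ∈ H ⊓ T,
      (QuotientGroup.mk x : G ⧸ H.normalCore) ∈ UHypercenter (G ⧸ H.normalCore)

/-- `H` is 𝔖ₛ-quasinormal in `G`. -/
def SsQuasinormal {G : Type*} [Group G] (H : Subgroup G) : Prop :=
  ∃ T : Subgroup G, T.Normal ∧ SPermutable (H ⊔ T) ∧
    ∀ x ∈ H ⊓ T,
      (QuotientGroup.mk x : G ⧸ H.normalCore) ∈ SHypercenter (G ⧸ H.normalCore)

/-- A group is supersoluble if it has a chain of subgroups, each normal in the whole
group, reaching from `⊥` to `⊤`, with all successive factors cyclic. -/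
def IsSupersoluble (G : Type*) [Group G] : Prop :=
  ∃ (k : ℕ) (c : Fin (k + 1) → Subgroup G),
    c 0 = ⊥ ∧ c (Fin.last k) = ⊤ ∧ (∀ i, (c i).Normal) ∧
    (∀ i : Fin k, c i.castSucc ≤ c i.succ) ∧
    ∀ i : Fin k, ∃ g ∈ c i.succ, ∀ x ∈ c i.succ, ∃ m : ℤ, x⁻¹ * g ^ m ∈ c i.castSucc

/-- `A` is subnormal in `G`. -/
def IsSubnormal {G : Type*} [Group G] (A : Subgroup G) : Prop :=
  ∃ (n : ℕ) (c : Fin (n + 1) → Subgroup G), c 0 = A ∧ c (Fin.last n) = ⊤ ∧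
    ∀ i : Fin n, c i.castSucc ≤ c i.succ ∧
      ∀ x ∈ c i.succ, ∀ a ∈ c i.castSucc, x * a * x⁻¹ ∈ c i.castSucc

/-- `H` has a supersoluble supplement in the ambient group. -/
def HasSupersolubleSupplement {G : Type*} [Group G] (H : Subgroup G) : Prop :=
  ∃ T : Subgroup G, IsSupersoluble T ∧ (H : Set G) * (T : Set G) = Set.univ

/-- A group is `p`-nilpotent if it has a normal subgroup of order prime to `p`
and of `p`-power index (a normal `p`-complement). -/
def IsPNilpotent (p : ℕ) (G : Type*) [Group G] : Prop :=
  ∃ N : Subgroup G, N.Normal ∧ Nat.Coprime (Nat.card N) p ∧ ∃ k : ℕ, N.index = p ^ k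

/-- `H` has a `p`-nilpotent supplement in the ambient group. -/
def HasPNilpotentSupplement {G : Type*} [Group G] (p : ℕ) (H : Subgroup G) : Prop :=
  ∃ T : Subgroup G, IsPNilpotent p T ∧ (H : Set G) * (T : Set G) = Set.univ

/-- `H` is an `n`-maximal subgroup of `P`: there is a chain
`H = Hₙ < ⋯ < H₁ < H₀ = P` with each term maximal in the preceding one. -/
def IsNMaximalIn {G : Type*} [Group G] (n : ℕ) (H P : Subgroup G) : Prop :=
  ∃ c : Fin (n + 1) → Subgroup G, c 0 = P ∧ c (Fin.last n) = H ∧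
    ∀ i : Fin n, IsMaximalIn (c i.succ) (c i.castSucc)

/-- A group is quasinilpotent if every element induces an inner automorphism
on every chief factor. -/
def IsQuasinilpotentGroup (G : Type*) [Group G] : Prop :=
  ∀ A B : Subgroup G, IsChiefFactor A B →
    ∀ x : G, ∃ y ∈ A, ∀ h ∈ A, (x * h * x⁻¹) * (y * h * y⁻¹)⁻¹ ∈ B

/-- The generalized Fitting subgroup: the product of all normal quasinilpotent
subgroups. -/
def generalizedFitting (G : Type*) [Group G] : Subgroup G :=
  sSup {N : Subgroup G | N.Normal ∧ IsQuasinilpotentGroup N}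

/-- The generalized Fitting subgroup of a subgroup `H`, as a subgroup of `G`. -/
def FStarIn {G : Type*} [Group G] (H : Subgroup G) : Subgroup G :=
  (generalizedFitting H).map H.subtype

/-- The Fitting subgroup: the product of all nilpotent normal subgroups. -/
def fittingSubgroup (G : Type*) [Group G] : Subgroup G :=
  sSup {N : Subgroup G | N.Normal ∧ Group.IsNilpotent N}

/-- The Fitting subgroup of a subgroup `H`, as a subgroup of `G`. -/
def FittingIn {G : Type*} [Group G] (H : Subgroup G) : Subgroup G :=
  (fittingSubgroup H).map H.subtype


set_option linter.all false


/-- the subgroup generated by all `q`-elements, `q ≠ p` -/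
def opp (p : ℕ) (G : Type*) [Group G] : Subgroup G :=
  Subgroup.closure {g : G | ∃ q k : ℕ, q.Prime ∧ q ≠ p ∧ g ^ (q ^ k) = 1}

theorem mem_opp_of_pow {p : ℕ} {G : Type*} [Group G] {g : G} {q k : ℕ} (hq : q.Prime)
    (hqp : q ≠ p) (h : g ^ (q ^ k) = 1) : g ∈ opp p G :=
  Subgroup.subset_closure ⟨q, k, hq, hqp, h⟩

theorem opp_map_le {p : ℕ} {G H : Type*} [Group G] [Group H] (f : G →* H) :
    (opp p G).map f ≤ opp p H := by
  rw [Subgroup.map_le_iff_le_comap, opp, Subgroup.closure_le]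
  rintro g ⟨q, k, hq, hqp, h⟩
  exact mem_opp_of_pow hq hqp (k := k) (by rw [← map_pow, h, map_one])

instance opp_char (p : ℕ) (G : Type*) [Group G] : (opp p G).Characteristic :=
  Subgroup.characteristic_iff_map_le.2 fun _ => opp_map_le _

theorem opp_index {p : ℕ} (hp : p.Prime) (G : Type*) [Group G] [Finite G] :
    ∃ k : ℕ, (opp p G).index = p ^ k := by
  refine ⟨_, Nat.eq_prime_pow_of_unique_prime_dvd (Subgroup.index_ne_zero_of_finite) ?_⟩
  intro q hq hd
  by_contra hqp
  have := Fact.mk hq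
  obtain ⟨Q⟩ : Nonempty (Sylow q G) := inferInstance
  have h1 : (Q : Subgroup G) ≤ opp p G := by
    intro g hg
    obtain ⟨k, hk⟩ := Q.isPGroup' ⟨g, hg⟩
    exact mem_opp_of_pow hq hqp (k := k) (by simpa [Subtype.ext_iff] using hk)
  exact Q.not_dvd_index (hd.trans (Subgroup.index_dvd_of_le h1))

theorem opp_le_of_index {p : ℕ} (hp : p.Prime) {G : Type*} [Group G] {W : Subgroup G} (hW : W.Normal)
    {k : ℕ} (h : W.index = p ^ k) : opp p G ≤ W := by
  rw [opp, Subgroup.closure_le]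
  rintro g ⟨q, j, hq, hqp, h1⟩
  have h2 : (g : G ⧸ W) ^ (q ^ j) = 1 := by rw [← QuotientGroup.mk_pow, h1]; rfl
  have h3 : (g : G ⧸ W) ^ (p ^ k) = 1 := by
    rw [← h, Subgroup.index_eq_card]; exact pow_card_eq_one'
  have h4 : orderOf (g : G ⧸ W) = 1 := by
    have hc : Nat.Coprime (q ^ j) (p ^ k) := Nat.Coprime.pow _ _ ((Nat.coprime_primes hq hp).2 hqp)
    exact Nat.eq_one_of_dvd_coprimes hc (orderOf_dvd_of_pow_eq_one h2) (orderOf_dvd_of_pow_eq_one h3)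
  rw [orderOf_eq_one_iff] at h4
  exact (QuotientGroup.eq_one_iff g).1 h4

theorem pnil_iff {p : ℕ} (hp : p.Prime) (G : Type*) [Group G] [Finite G] :
    IsPNilpotent p G ↔ ¬ p ∣ Nat.card (opp p G) := by
  constructor
  · rintro ⟨W, hW, hc, k, hk⟩ hd
    have := hd.trans (Subgroup.card_dvd_of_le (opp_le_of_index hp hW hk))
    exact (Nat.Prime.coprime_iff_not_dvd hp).1 hc.symm this
  · intro h
    exact ⟨opp p G, inferInstance, ((Nat.Prime.coprime_iff_not_dvd hp).2 h).symm, opp_index hp G⟩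

theorem le_opp_of_coprime {p : ℕ} (hp : p.Prime) {G : Type*} [Group G] [Finite G] {K : Subgroup G}
    (h : ¬ p ∣ Nat.card K) : K ≤ opp p G := by
  intro g hg
  obtain ⟨k, hk⟩ := opp_index hp G
  have h2 : (g : G ⧸ opp p G) ^ (Nat.card K) = 1 := by
    rw [← QuotientGroup.mk_pow]
    have : (⟨g, hg⟩ : K) ^ (Nat.card K) = 1 := pow_card_eq_one'
    have : g ^ (Nat.card K) = 1 := congrArg Subtype.val this
    rw [this]; rfl
  have h3 : (g : G ⧸ opp p G) ^ (p ^ k) = 1 := by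
    rw [← hk, Subgroup.index_eq_card]; exact pow_card_eq_one'
  have h4 : orderOf (g : G ⧸ opp p G) = 1 := by
    have hc : Nat.Coprime (Nat.card K) (p ^ k) :=
      Nat.Coprime.pow_right _ ((Nat.Prime.coprime_iff_not_dvd hp).2 h).symm
    exact Nat.eq_one_of_dvd_coprimes hc (orderOf_dvd_of_pow_eq_one h2) (orderOf_dvd_of_pow_eq_one h3)
  rw [orderOf_eq_one_iff] at h4
  exact (QuotientGroup.eq_one_iff g).1 h4

/-- a normal subgroup meeting a Sylow subgroup trivially has order prime to `p` -/
theorem not_dvd_of_inf_eq_bot {p : ℕ} (hp : p.Prime) {G : Type*} [Group G] [Finite G]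
    {P N : Subgroup G} (hP : IsPGroup p P) (hi : ¬ p ∣ P.index) (hN : N.Normal)
    (h : P ⊓ N = ⊥) : ¬ p ∣ Nat.card N := by
  intro hd
  have := Fact.mk hp
  obtain ⟨x, hx⟩ := exists_prime_orderOf_dvd_card' p hd
  have hx1 : orderOf (x : G) = p := by rw [Subgroup.orderOf_coe, hx]
  have hz : IsPGroup p (Subgroup.zpowers (x : G)) :=
    IsPGroup.of_card (n := 1) (by rw [Nat.card_zpowers, hx1, pow_one])
  obtain ⟨Q, hQ⟩ := hz.exists_le_sylow
  obtain ⟨g, hg⟩ := MulAction.exists_smul_eq G Q (hP.toSylow hi)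
  have hxQ : (x : G) ∈ Q := hQ (Subgroup.mem_zpowers _)
  have h1 : g * x * g⁻¹ ∈ P := by
    have : g * x * g⁻¹ ∈ (g • Q : Sylow p G) := by
      rw [← SetLike.mem_coe, Sylow.coe_smul]
      exact ⟨x, hxQ, rfl⟩
    rw [hg] at this
    exact this
  have h2 : g * x * g⁻¹ ∈ P ⊓ N := ⟨h1, hN.conj_mem _ x.2 g⟩
  rw [h, Subgroup.mem_bot, conj_eq_one_iff] at h2
  rw [h2, orderOf_one] at hx1
  exact hp.one_lt.ne hx1

theorem pnil_of_inf_eq_bot {p : ℕ} (hp : p.Prime) {G : Type*} [Group G] [Finite G]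
    {P : Subgroup G} (hP : IsPGroup p P) (hi : ¬ p ∣ P.index)
    (h : P ⊓ opp p G = ⊥) : IsPNilpotent p G :=
  (pnil_iff hp G).2 (not_dvd_of_inf_eq_bot hp hP hi inferInstance h)

theorem sup_opp_eq_top {p : ℕ} (hp : p.Prime) {G : Type*} [Group G] [Finite G]
    {P : Subgroup G} (hi : ¬ p ∣ P.index) : P ⊔ opp p G = ⊤ := by
  rw [← Subgroup.index_eq_one]
  obtain ⟨k, hk⟩ := opp_index hp G
  have h1 : (P ⊔ opp p G).index ∣ p ^ k := hk ▸ Subgroup.index_dvd_of_le le_sup_right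
  have h2 : (P ⊔ opp p G).index ∣ P.index := Subgroup.index_dvd_of_le le_sup_left
  exact Nat.eq_one_of_dvd_coprimes
    (Nat.Coprime.pow_left _ ((Nat.Prime.coprime_iff_not_dvd hp).2 hi)) h1 h2

theorem isSylowIn_iff {p : ℕ} {G : Type*} [Group G] {P : Subgroup G} :
    IsSylowIn p P ⊤ ↔ IsPGroup p P ∧ ¬ p ∣ P.index := by
  unfold IsSylowIn
  rw [← Subgroup.relIndex, Subgroup.relIndex_top_right]
  simp

/-- additive functions on `opp` vanish -/
theorem opp_hom_zero {p : ℕ} (hp : p.Prime) {G : Type*} [Group G]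
    (V : G → ZMod p) (hV : ∀ x ∈ opp p G, ∀ y ∈ opp p G, V (x * y) = V x + V y) :
    ∀ x ∈ opp p G, V x = 0 := by
  have := Fact.mk hp
  have h1 : V 1 = 0 := by
    have := hV 1 (one_mem _) 1 (one_mem _)
    simpa using this
  have hpow : ∀ x ∈ opp p G, ∀ n : ℕ, V (x ^ n) = n * V x := by
    intro x hx n
    induction n with
    | zero => simp [h1]
    | succ n ih => rw [pow_succ, hV _ (pow_mem hx n) _ hx, ih]; push_cast; ring
  intro x hx
  refine Subgroup.closure_induction (p := fun x _ => V x = 0) ?_ h1 ?_ ?_ hx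
  · rintro g ⟨q, k, hq, hqp, h⟩
    have := hpow g (mem_opp_of_pow hq hqp h) (q ^ k)
    rw [h, h1] at this
    rcases mul_eq_zero.1 this.symm with h | h
    · exfalso
      rw [ZMod.natCast_eq_zero_iff] at h
      exact hqp ((Nat.prime_dvd_prime_iff_eq hp hq).1 (hp.dvd_of_dvd_pow h)).symm
    · exact h
  · intro x y hx hy h2 h3
    rw [hV x hx y hy, h2, h3, add_zero]
  · intro x hx h2
    have := hV x hx x⁻¹ (inv_mem hx)
    rw [mul_inv_cancel, h1, h2, zero_add] at this
    exact this.symm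


theorem exists_hom_ne_one {p : ℕ} (hp : p.Prime) {R : Type*} [Group R] [Finite R] [Nontrivial R]
    (hR : IsPGroup p R) : ∃ f : R →* Multiplicative (ZMod p), f ≠ 1 := by
  have := Fact.mk hp
  obtain ⟨k, hk⟩ := IsPGroup.iff_card.1 hR
  have hk0 : k ≠ 0 := by
    rintro rfl
    have := Finite.one_lt_card (α := R)
    rw [hk, pow_zero] at this
    omega
  obtain ⟨j, rfl⟩ := Nat.exists_eq_succ_of_ne_zero hk0
  obtain ⟨S, hS⟩ := Sylow.exists_subgroup_card_pow_prime (G := R) p (n := j)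
    (by rw [hk]; exact pow_dvd_pow _ (Nat.le_succ j))
  have hi : S.index = p := by
    have := S.card_mul_index
    rw [hk, hS, pow_succ] at this
    exact Nat.eq_of_mul_eq_mul_left (pow_pos hp.pos j) this
  have hN : S.Normal := Subgroup.normal_of_index_eq_minFac_card (by
    rw [hi, hk, Nat.Prime.pow_minFac hp (Nat.succ_ne_zero j)])
  have hc : Nat.card (R ⧸ S) = p := by rw [← Subgroup.index_eq_card, hi]
  let e : (R ⧸ S) ≃* Multiplicative (ZMod p) := mulEquivOfPrimeCardEq (p := p) hc
    (by simp)
  refine ⟨e.toMonoidHom.comp (QuotientGroup.mk' S), ?_⟩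
  intro h
  have hST : S = ⊤ := by
    rw [eq_top_iff]
    intro x _
    have h1 := DFunLike.congr_fun h x
    have h2 : e (x : R ⧸ S) = 1 := h1
    rw [MulEquiv.map_eq_one_iff] at h2
    exact (QuotientGroup.eq_one_iff x).1 h2
  rw [hST, Subgroup.index_top] at hi
  exact hp.one_lt.ne hi

theorem exists_lam {p : ℕ} (hp : p.Prime) {G : Type*} [Group G] [Finite G] {P R : Subgroup G}
    (hP : IsPGroup p P) (hRP : R ≤ P) (hn : ∀ u ∈ P, ∀ x ∈ R, u * x * u⁻¹ ∈ R) (hR : R ≠ ⊥) :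
    ∃ l : G → ZMod p, (∀ x ∈ R, ∀ y ∈ R, l (x * y) = l x + l y) ∧
      (∀ u ∈ P, ∀ x ∈ R, l (u * x * u⁻¹) = l x) ∧ ∃ x ∈ R, l x ≠ 0 := by
  classical
  have := Fact.mk hp
  let c : P → R →* R := fun u =>
    { toFun := fun x => ⟨u⁻¹ * x * u, by simpa using hn u⁻¹ (inv_mem u.2) x x.2⟩
      map_one' := by ext; simp
      map_mul' := by intro x y; ext; simp [mul_assoc] }
  let act : MulAction P (R →* Multiplicative (ZMod p)) :=
    { smul := fun u f => f.comp (c u)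
      one_smul := by
        intro f; ext x
        change f (c 1 x) = f x
        congr 1; ext; simp [c]
      mul_smul := by
        intro u v f; ext x
        change f (c (u * v) x) = f (c v (c u x))
        congr 1; ext; simp [c, mul_assoc] }
  have hRp : IsPGroup p R := hP.to_le hRP
  have hRn : Nontrivial R := (Subgroup.nontrivial_iff_ne_bot R).2 hR
  obtain ⟨f0, hf0⟩ := exists_hom_ne_one hp hRp
  have hfin : Finite (R →* Multiplicative (ZMod p)) := DFunLike.finite _
  have hd : p ∣ Nat.card (R →* Multiplicative (ZMod p)) := by
    have h1 : orderOf f0 ∣ p := by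
      apply orderOf_dvd_of_pow_eq_one
      ext x
      rw [MonoidHom.pow_apply]
      have : (f0 x) ^ (Nat.card (Multiplicative (ZMod p))) = 1 := pow_card_eq_one'
      simpa using this
    rcases (Nat.dvd_prime hp).1 h1 with h | h
    · exact absurd (orderOf_eq_one_iff.1 h) hf0
    · exact (dvd_of_eq h.symm).trans (orderOf_dvd_natCard f0)
  have h1f : (1 : R →* Multiplicative (ZMod p)) ∈
      MulAction.fixedPoints P (R →* Multiplicative (ZMod p)) := by
    intro u; rfl
  obtain ⟨f, hf, hne⟩ := hP.exists_fixed_point_of_prime_dvd_card_of_fixed_point _ hd h1f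
  refine ⟨fun x => if h : x ∈ R then (f ⟨x, h⟩).toAdd else 0, ?_, ?_, ?_⟩
  · intro x hx y hy
    simp only [dif_pos hx, dif_pos hy, dif_pos (mul_mem hx hy)]
    rw [← toAdd_mul, ← map_mul]; rfl
  · intro u hu x hx
    simp only [dif_pos hx, dif_pos (hn u hu x hx)]
    have h1 := DFunLike.congr_fun (hf ⟨u⁻¹, inv_mem hu⟩) ⟨x, hx⟩
    rw [← h1]
    change _ = (f (c ⟨u⁻¹, inv_mem hu⟩ ⟨x, hx⟩)).toAdd
    congr 2
    ext; simp [c]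
  · by_contra hcon
    push Not at hcon
    apply hne
    ext x
    have := hcon x x.2
    simp only [dif_pos x.2] at this
    rw [MonoidHom.one_apply]
    exact (toAdd_eq_zero.1 this).symm

open Classical in
/-- Key Lemma. -/
theorem key_lemma {p : ℕ} (hp : p.Prime) {G : Type*} [Group G] [Finite G] {P : Subgroup G}
    (hP : IsPGroup p P) (hi : ¬ p ∣ P.index) (hR : P ⊓ opp p G ≠ ⊥) :
    ∃ M : Subgroup G, M ≤ P ∧ (∀ u ∈ P, ∀ x ∈ M, u * x * u⁻¹ ∈ M) ∧
      Nat.card M * p = Nat.card P ∧ ¬ (P ⊓ opp p G ≤ M) ∧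
      ∀ K : Subgroup G, Nat.card K = P.index → ∀ u ∈ P, (∀ k ∈ K, u * k * u⁻¹ ∈ K) → u ∈ M := by
  have := Fact.mk hp
  have hopN : (opp p G).Normal := inferInstance
  obtain ⟨l, hl, hlP, r0, hr0, hlr0⟩ := exists_lam hp hP inf_le_left
    (fun u hu x hx => Subgroup.mem_inf.2 ⟨mul_mem (mul_mem hu hx.1) (inv_mem hu), hopN.conj_mem _ hx.2 _⟩) hR
  set R := P ⊓ opp p G with hRdef
  have hl1 : l 1 = 0 := by
    have := hl 1 (one_mem _) 1 (one_mem _); simpa using this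
  have hlinv : ∀ x ∈ R, l x⁻¹ = - l x := by
    intro x hx
    have := hl x hx x⁻¹ (inv_mem hx)
    rw [mul_inv_cancel, hl1] at this
    exact (neg_eq_of_add_eq_zero_right this.symm).symm
  have : Fintype (G ⧸ P) := Fintype.ofFinite _
  -- sections
  let Sec : (G ⧸ P → G) → Prop := fun s => ∀ q, s q ∈ opp p G ∧ (s q : G ⧸ P) = q
  have hsec : ∃ s, Sec s := by
    have : ∀ q : G ⧸ P, ∃ g : G, g ∈ opp p G ∧ (g : G ⧸ P) = q := by
      intro q
      obtain ⟨g, rfl⟩ := QuotientGroup.mk_surjective q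
      have hg : g ∈ opp p G ⊔ P := by rw [sup_comm, sup_opp_eq_top hp hi]; trivial
      obtain ⟨y, hy, z, hz, rfl⟩ := Subgroup.mem_sup_of_normal_left.1 hg
      refine ⟨y, hy, ?_⟩
      rw [QuotientGroup.eq]; simpa using hz
    choose s hs using this
    exact ⟨s, hs⟩
  have hRmem : ∀ s t, Sec s → Sec t → ∀ q, (s q)⁻¹ * t q ∈ R := by
    intro s t hs ht q
    refine Subgroup.mem_inf.2 ⟨?_, mul_mem (inv_mem (hs q).1) (ht q).1⟩
    rw [← QuotientGroup.eq, (hs q).2, (ht q).2]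
  let dl : (G ⧸ P → G) → (G ⧸ P → G) → ZMod p := fun s t => ∑ q, l ((s q)⁻¹ * t q)
  have hdl : ∀ s t w, Sec s → Sec t → Sec w → dl s w = dl s t + dl t w := by
    intro s t w hs ht hw
    simp only [dl]
    rw [← Finset.sum_add_distrib]
    refine Finset.sum_congr rfl fun q _ => ?_
    rw [← hl _ (hRmem s t hs ht q) _ (hRmem t w ht hw q)]
    congr 1; group
  let cj : G → (G ⧸ P → G) → (G ⧸ P → G) := fun u s q => u * s (u⁻¹ • q) * u⁻¹
  have hcj : ∀ u ∈ P, ∀ s, Sec s → Sec (cj u s) := by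
    intro u hu s hs q
    refine ⟨hopN.conj_mem _ (hs _).1 _, ?_⟩
    have h1 : ((u * s (u⁻¹ • q) * u⁻¹ : G) : G ⧸ P) = ((u * s (u⁻¹ • q) : G) : G ⧸ P) := by
      rw [QuotientGroup.eq]
      have h0 : (u * s (u⁻¹ • q) * u⁻¹)⁻¹ * (u * s (u⁻¹ • q)) = u := by group
      rw [h0]; exact hu
    change ((u * s (u⁻¹ • q) * u⁻¹ : G) : G ⧸ P) = q
    rw [h1, ← smul_eq_mul, ← MulAction.Quotient.smul_coe, (hs _).2, smul_inv_smul]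
  have hdlcj : ∀ u ∈ P, ∀ s t, Sec s → Sec t → dl (cj u s) (cj u t) = dl s t := by
    intro u hu s t hs ht
    simp only [dl, cj]
    rw [← Equiv.sum_comp (MulAction.toPerm u : Equiv.Perm (G ⧸ P))]
    refine Finset.sum_congr rfl fun q _ => ?_
    rw [← hlP u hu _ (hRmem s t hs ht q)]
    simp only [MulAction.toPerm_apply, inv_smul_smul]
    congr 1; group
  have hcjmul : ∀ u v s, cj (u * v) s = cj u (cj v s) := by
    intro u v s
    funext q
    simp only [cj, mul_inv_rev, mul_smul]
    group
  obtain ⟨s, hs⟩ := hsec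
  let d : P →* Multiplicative (ZMod p) := MonoidHom.mk' (fun u => Multiplicative.ofAdd (dl s (cj u s)))
    (by
      intro u v
      rw [← ofAdd_add]
      congr 1
      rw [Subgroup.coe_mul, hcjmul, hdl s (cj u s) _ hs (hcj u u.2 s hs)
        (hcj u u.2 _ (hcj v v.2 s hs)), hdlcj u u.2 _ _ hs (hcj v v.2 s hs)])
  have hdval : ∀ u : P, d u = Multiplicative.ofAdd (dl s (cj u s)) := fun u => rfl
  -- the transfer
  let V : G → ZMod p := fun x => ∑ q, l ((s q)⁻¹ * (x * s (x⁻¹ • q)))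
  have hVmem : ∀ x ∈ opp p G, ∀ q, (s q)⁻¹ * (x * s (x⁻¹ • q)) ∈ R := by
    intro x hx q
    refine Subgroup.mem_inf.2 ⟨?_, mul_mem (inv_mem (hs q).1) (mul_mem hx (hs _).1)⟩
    rw [← QuotientGroup.eq, (hs q).2, ← smul_eq_mul, ← MulAction.Quotient.smul_coe, (hs _).2,
      smul_inv_smul]
  have hV : ∀ x ∈ opp p G, V x = 0 := by
    apply opp_hom_zero hp
    intro x hx y hy
    simp only [V]
    have h2 : ∑ q, l ((s q)⁻¹ * (y * s (y⁻¹ • q))) =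
        ∑ q, l ((s (x⁻¹ • q))⁻¹ * (y * s (y⁻¹ • x⁻¹ • q))) :=
      (Equiv.sum_comp (MulAction.toPerm x⁻¹ : Equiv.Perm (G ⧸ P))
        (fun q => l ((s q)⁻¹ * (y * s (y⁻¹ • q))))).symm
    rw [h2, ← Finset.sum_add_distrib]
    refine Finset.sum_congr rfl fun q _ => ?_
    rw [← hl _ (hVmem x hx q) _ (hVmem y hy _)]
    congr 1
    rw [mul_inv_rev, mul_smul]
    group
  have hdR : ∀ u ∈ R, dl s (cj u s) = - (P.index : ZMod p) * l u := by
    intro u hu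
    have h1 : dl s (cj u s) = V u + ∑ _q : G ⧸ P, l u⁻¹ := by
      simp only [dl, V, cj]
      rw [← Finset.sum_add_distrib]
      refine Finset.sum_congr rfl fun q _ => ?_
      rw [← hl _ (hVmem u hu.2 q) _ (inv_mem hu)]
      congr 1; group
    rw [h1, hV u hu.2, hlinv u hu, Finset.sum_const, Finset.card_univ, ← Nat.card_eq_fintype_card,
      ← Subgroup.index_eq_card, nsmul_eq_mul]
    ring
  have hd0 : dl s (cj r0 s) ≠ 0 := by
    rw [hdR r0 hr0]
    refine mul_ne_zero (neg_ne_zero.2 ?_) hlr0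
    rw [Ne, ZMod.natCast_eq_zero_iff]; exact hi
  refine ⟨d.ker.map P.subtype, Subgroup.map_subtype_le _, ?_, ?_, ?_, ?_⟩
  · rintro u hu _ ⟨x, hx, rfl⟩
    refine ⟨⟨u, hu⟩ * x * ⟨u, hu⟩⁻¹, ?_, by simp⟩
    exact (inferInstance : d.ker.Normal).conj_mem x hx _
  · rw [Subgroup.card_map_of_injective P.subtype_injective, ← d.ker.card_mul_index]
    congr 1
    rw [Subgroup.index_ker]
    have h1 : Nat.card d.range ∣ p := by
      have := Subgroup.card_subgroup_dvd_card d.range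
      simpa using this
    rcases (Nat.dvd_prime hp).1 h1 with h | h
    · exfalso
      rw [Subgroup.card_eq_one] at h
      have : d ⟨r0, hr0.1⟩ ∈ d.range := ⟨_, rfl⟩
      rw [h, Subgroup.mem_bot, hdval] at this
      exact hd0 (ofAdd_eq_one.1 this)
    · exact h.symm
  · intro hle
    obtain ⟨x, hx, hx2⟩ := hle hr0
    have hx' : d x = 1 := hx
    rw [hdval] at hx'
    apply hd0
    rw [← hx2]
    exact ofAdd_eq_one.1 hx'
  · intro K hK u hu hnorm
    have hKp : ¬ p ∣ Nat.card K := by rw [hK]; exact hi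
    have hKopp : K ≤ opp p G := le_opp_of_coprime hp hKp
    have hdisj : P ⊓ K = ⊥ := by
      apply Subgroup.inf_eq_bot_of_coprime
      obtain ⟨k, hk⟩ := IsPGroup.iff_card.1 hP
      rw [hk]
      exact Nat.Coprime.pow_left _ ((Nat.Prime.coprime_iff_not_dvd hp).2 hKp)
    have hinj : ∀ a ∈ K, ∀ b ∈ K, (a : G ⧸ P) = b → a = b := by
      intro a ha b hb hab
      rw [QuotientGroup.eq] at hab
      have : a⁻¹ * b ∈ P ⊓ K := Subgroup.mem_inf.2 ⟨hab, mul_mem (inv_mem ha) hb⟩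
      rw [hdisj, Subgroup.mem_bot] at this
      exact inv_mul_eq_one.1 this
    have hbij : Function.Bijective (fun k : K => ((k : G) : G ⧸ P)) := by
      rw [Nat.bijective_iff_injective_and_card]
      refine ⟨fun a b h => Subtype.ext (hinj a a.2 b b.2 h), ?_⟩
      rw [hK, Subgroup.index_eq_card]
    choose t ht using hbij.2
    let t' : G ⧸ P → G := fun q => (t q : G)
    have hts : Sec t' := fun q => ⟨hKopp (t q).2, ht q⟩
    have htu : cj u t' = t' := by
      funext q
      apply hinj _ (hnorm _ (t _).2) _ (t q).2
      exact ((hcj u hu t' hts q).2).trans (ht q).symm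
    refine ⟨⟨u, hu⟩, ?_, rfl⟩
    change d ⟨u, hu⟩ = 1
    rw [hdval]
    rw [ofAdd_eq_one]
    change dl s (cj u s) = 0
    have e1 := hdl s t' (cj u s) hs hts (hcj u hu s hs)
    have e2 := hdlcj u hu t' s hts hs
    have e3 := hdl s t' s hs hts hs
    rw [htu] at e2
    rw [e1, e2, ← e3]
    simp [dl, hl1]


theorem exists_inv_card {p : ℕ} (hp : p.Prime) {A : Type*} [Group A] (hA : IsPGroup p A) {m : ℕ}
    (hm : ¬ p ∣ m) {x : A} (hx : x ^ m = 1) : x = 1 := by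
  obtain ⟨k, hk⟩ := hA x
  rw [← orderOf_eq_one_iff, ← Nat.dvd_one]
  have h1 := orderOf_dvd_of_pow_eq_one hx
  have h2 := orderOf_dvd_of_pow_eq_one hk
  have : Nat.Coprime (p ^ k) m := Nat.Coprime.pow_left _ ((Nat.Prime.coprime_iff_not_dvd hp).2 hm)
  rw [← this]
  exact Nat.dvd_gcd h2 h1

theorem index_dvd_of_mul {G : Type*} [Group G] [Finite G] {H T : Subgroup G}
    (h : (H : Set G) * (T : Set G) = Set.univ) : T.index ∣ Nat.card H := by
  have h1 : MulAction.orbit H ((1 : G) : G ⧸ T) = Set.univ := by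
    rw [Set.eq_univ_iff_forall]
    intro q
    obtain ⟨g, rfl⟩ := QuotientGroup.mk_surjective q
    have : g ∈ (H : Set G) * (T : Set G) := by rw [h]; trivial
    obtain ⟨a, ha, b, hb, rfl⟩ := this
    refine ⟨⟨a, ha⟩, ?_⟩
    change ((a * 1 : G) : G ⧸ T) = _
    rw [QuotientGroup.eq]
    simpa using hb
  have h2 := MulAction.index_stabilizer H ((1 : G) : G ⧸ T)
  rw [h1, Set.ncard_univ, ← Subgroup.index_eq_card] at h2
  rw [← h2]
  exact Subgroup.index_dvd_card _

theorem no_supplement {p : ℕ} (hp : p.Prime) {G : Type*} [Group G] [Finite G] {P M H : Subgroup G}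
    (hP : IsPGroup p P) (hi : ¬ p ∣ P.index) (hMP : M ≤ P) (hHM : H ≤ M) (hx : ∃ x ∈ P, x ∉ M)
    (hK : ∀ K : Subgroup G, Nat.card K = P.index → ∀ u ∈ P, (∀ k ∈ K, u * k * u⁻¹ ∈ K) → u ∈ M) :
    ¬ HasPNilpotentSupplement p H := by
  rintro ⟨T, ⟨W, hW, hcop, k, hk⟩, hHT⟩
  have := Fact.mk hp
  have hHp : IsPGroup p H := hP.to_le (hHM.trans hMP)
  obtain ⟨a, ha⟩ := IsPGroup.iff_card.1 hHp
  obtain ⟨m, hm⟩ := IsPGroup.iff_card.1 hP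
  have hKc : Nat.card (W.map T.subtype) = Nat.card W :=
    Subgroup.card_map_of_injective T.subtype_injective
  have hcard : Nat.card (W.map T.subtype) = P.index := by
    rw [hKc]
    apply Nat.dvd_antisymm
    · have h1 : Nat.card W ∣ Nat.card P * P.index := by
        rw [P.card_mul_index, ← hKc]; exact Subgroup.card_subgroup_dvd_card _
      refine Nat.Coprime.dvd_of_dvd_mul_left ?_ h1
      rw [hm]; exact Nat.Coprime.pow_right _ hcop
    · have h1 : P.index ∣ Nat.card W * p ^ (k + a) := by
        have h2 : Nat.card G ∣ Nat.card W * p ^ (k + a) := by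
          rw [← T.card_mul_index, ← W.card_mul_index, hk, pow_add, ← mul_assoc]
          exact Nat.mul_dvd_mul_left _ (ha ▸ index_dvd_of_mul hHT)
        exact (Subgroup.index_dvd_card P).trans h2
      refine Nat.Coprime.dvd_of_dvd_mul_right ?_ h1
      exact Nat.Coprime.pow_right _ (((Nat.Prime.coprime_iff_not_dvd hp).2 hi).symm)
  obtain ⟨x, hxP, hxM⟩ := hx
  have hxm : x ∈ (H : Set G) * (T : Set G) := by rw [hHT]; trivial
  obtain ⟨h, hh, t, ht, rfl⟩ := hxm
  have htP : t ∈ P := by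
    have := mul_mem (inv_mem (hMP (hHM hh))) hxP
    simpa using this
  have htM : t ∈ M := by
    refine hK _ hcard t htP ?_
    rintro _ ⟨w, hw, rfl⟩
    exact ⟨⟨t, ht⟩ * w * ⟨t, ht⟩⁻¹, hW.conj_mem w hw _, by simp⟩
  exact hxM (mul_mem (hHM hh) htM)

theorem cent_of_count {p q k m n : ℕ} (hp : p.Prime) (hq : q.Prime) (hqp : q ≠ p)
    {G : Type*} [Group G] [Finite G]
    (hcop : Nat.Coprime (Nat.card G) (∏ i ∈ Finset.Icc 1 n, (p ^ i - 1)))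
    {g : G} (hg : g ^ (q ^ k) = 1) {D : Subgroup G} (hD : Nat.card D = p ^ m) (hmn : m ≤ n)
    (hnorm : ∀ d ∈ D, g * d * g⁻¹ ∈ D) : ∀ d ∈ D, g * d * g⁻¹ = d := by
  have := Fact.mk hq
  by_cases hg1 : g = 1
  · subst hg1; simp
  have hqG : q ∣ Nat.card G := by
    have h1 := orderOf_dvd_of_pow_eq_one hg
    obtain ⟨j, -, hj⟩ := (Nat.dvd_prime_pow hq).1 h1
    have hj0 : j ≠ 0 := by
      rintro rfl
      exact hg1 (orderOf_eq_one_iff.1 (by simpa using hj))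
    have : q ∣ orderOf g := by rw [hj]; exact dvd_pow_self _ hj0
    exact this.trans (orderOf_dvd_natCard g)
  have hgN : g ∈ Subgroup.normalizer (D : Set G) := by
    rw [Subgroup.mem_normalizer_iff]
    let f : D → D := fun d => ⟨g * d * g⁻¹, hnorm d d.2⟩
    have hf : Function.Injective f := by
      intro a b h
      have := congrArg Subtype.val h
      simpa [f] using this
    intro h
    refine ⟨hnorm h, fun h' => ?_⟩
    obtain ⟨d, hd⟩ := (Finite.injective_iff_surjective.1 hf) ⟨_, h'⟩
    have := congrArg Subtype.val hd
    have h3 : (d : G) = h := by simpa [f] using this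
    rw [← h3]; exact d.2
  let φ : MulAut D := Subgroup.normalizerMonoidHom D ⟨g, hgN⟩
  have hφ : ∀ d : D, ((φ d : D) : G) = g * d * g⁻¹ := fun d => rfl
  have hφq : φ ^ (q ^ k) = 1 := by
    rw [← map_pow]
    have : (⟨g, hgN⟩ : Subgroup.normalizer (D : Set G)) ^ (q ^ k) = 1 := by
      ext; simpa using hg
    rw [this, map_one]
  have hZ : IsPGroup q (Subgroup.zpowers φ) := by
    rintro ⟨x, j, rfl⟩
    refine ⟨k, ?_⟩
    ext1
    simp only [Subgroup.coe_pow, Subgroup.coe_one]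
    rw [← zpow_natCast, ← zpow_mul, mul_comm, zpow_mul, zpow_natCast, hφq, one_zpow]
  let F : Subgroup D := (φ : MulAut D).toMonoidHom.eqLocus (MonoidHom.id D)
  have hFm : ∀ d, d ∈ F ↔ φ d = d := fun d => Iff.rfl
  have hfix : (MulAction.fixedPoints (Subgroup.zpowers φ) D) = (F : Set D) := by
    ext d
    constructor
    · intro h
      exact h ⟨φ, Subgroup.mem_zpowers φ⟩
    · intro h
      have h1 : φ ∈ MulAction.stabilizer (MulAut D) d := h
      rintro ⟨x, hx⟩
      have : Subgroup.zpowers φ ≤ MulAction.stabilizer (MulAut D) d := by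
        rwa [Subgroup.zpowers_le]
      exact this hx
  have hmod := hZ.card_modEq_card_fixedPoints D
  rw [hfix] at hmod
  have hmod' : Nat.card D ≡ Nat.card F [MOD q] := hmod
  have hFd : Nat.card F ∣ p ^ m := hD ▸ Subgroup.card_subgroup_dvd_card F
  obtain ⟨f, hfm, hf⟩ := (Nat.dvd_prime_pow hp).1 hFd
  rw [hD, hf] at hmod'
  have hdiv : q ∣ p ^ f * (p ^ (m - f) - 1) := by
    have h1 := (Nat.modEq_iff_dvd' (Nat.pow_le_pow_right hp.pos hfm)).1 hmod'.symm
    have h2 : p ^ f * (p ^ (m - f) - 1) = p ^ m - p ^ f := by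
      rw [Nat.mul_sub, ← pow_add, mul_one, Nat.add_sub_cancel' hfm]
    rwa [h2]
  have hmf : m = f := by
    by_contra hne
    rcases (Nat.Prime.dvd_mul hq).1 hdiv with h | h
    · exact hqp ((Nat.prime_dvd_prime_iff_eq hq hp).1 (hq.dvd_of_dvd_pow h))
    · have h3 : q ∣ ∏ i ∈ Finset.Icc 1 n, (p ^ i - 1) :=
        h.trans (Finset.dvd_prod_of_mem (fun i => p ^ i - 1) (Finset.mem_Icc.2 ⟨by omega, by omega⟩))
      exact Nat.not_coprime_of_dvd_of_dvd hq.one_lt hqG h3 hcop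
  have hFtop : F = ⊤ := by
    apply Subgroup.eq_top_of_card_eq
    rw [hf, hD, hmf]
  intro d hd
  have : (⟨d, hd⟩ : D) ∈ F := by rw [hFtop]; trivial
  rw [hFm] at this
  exact congrArg Subtype.val this

theorem relIndex_dvd_idx {G : Type*} [Group G] [Finite G] (P N : Subgroup G) (hN : N.Normal) :
    P.relIndex N ∣ P.index := by
  refine ⟨(P ⊔ N).index, ?_⟩
  have h1 : N.relIndex P * (P ⊔ N).index = N.index := by
    rw [← Subgroup.relIndex_sup_right P N, Subgroup.relIndex_mul_index le_sup_right]
  have h2 : Nat.card (P ⊓ N : Subgroup G) * N.relIndex P = Nat.card P := by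
    have := (N.subgroupOf P).card_mul_index
    rw [← Subgroup.inf_subgroupOf_right, inf_comm, Nat.card_congr (Subgroup.subgroupOfEquivOfLe inf_le_left).toEquiv] at this
    rw [← this, Subgroup.relIndex, ← Subgroup.inf_subgroupOf_right, inf_comm]
  have h3 : Nat.card (P ⊓ N : Subgroup G) * P.relIndex N = Nat.card N := by
    have := (P.subgroupOf N).card_mul_index
    rw [← Subgroup.inf_subgroupOf_right, Nat.card_congr (Subgroup.subgroupOfEquivOfLe inf_le_right).toEquiv] at this
    rw [← this, Subgroup.relIndex, ← Subgroup.inf_subgroupOf_right]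
  have h4 := P.card_mul_index
  have h5 := N.card_mul_index
  have hpos : 0 < Nat.card (P ⊓ N : Subgroup G) * N.relIndex P := by rw [h2]; exact Nat.card_pos
  apply Nat.eq_of_mul_eq_mul_left hpos
  rw [h2, h4, ← h5, ← h1, ← h3, ← h2]
  ring

open scoped commutatorElement in
theorem stab_lemma {p : ℕ} (hp : p.Prime) {G : Type*} [Group G] [Finite G] {P : Subgroup G}
    (hP : IsPGroup p P) (hi : ¬ p ∣ P.index)
    (h : ∀ x ∈ P ⊓ opp p G, ∀ g ∈ opp p G, g * x * g⁻¹ ∈ P → ∃ u ∈ P, u * x * u⁻¹ = g * x * g⁻¹) :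
    IsPNilpotent p G := by
  apply pnil_of_inf_eq_bot hp hP hi
  by_contra hR
  have hopN : (opp p G).Normal := inferInstance
  obtain ⟨l, hl, hlP, r0, hr0, hlr0⟩ := exists_lam hp hP inf_le_left
    (fun u hu x hx => Subgroup.mem_inf.2
      ⟨mul_mem (mul_mem hu hx.1) (inv_mem hu), hopN.conj_mem _ hx.2 _⟩) hR
  have hl1 : l 1 = 0 := by
    have := hl 1 (one_mem _) 1 (one_mem _); simpa using this
  have hlinv : ∀ x ∈ P ⊓ opp p G, l x⁻¹ = - l x := by
    intro x hx
    have := hl x hx x⁻¹ (inv_mem hx)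
    rw [mul_inv_cancel, hl1] at this
    exact (neg_eq_of_add_eq_zero_right this.symm).symm
  let R : Subgroup (opp p G) := P.subgroupOf (opp p G)
  have hRp : IsPGroup p R := hP.comap_subtype
  have hRi : ¬ p ∣ R.index := fun hd => hi (hd.trans (relIndex_dvd_idx P (opp p G) hopN))
  let V := R.transferFocal
  have hQp : IsPGroup p (R ⧸ R.focalSubgroupOf) := hRp.to_quotient _
  have hV : ∀ x : opp p G, V x = 1 := by
    have h1 : opp p G ≤ V.ker.map (opp p G).subtype := by
      conv_lhs => rw [opp]
      rw [Subgroup.closure_le]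
      rintro g ⟨q, k, hq, hqp, h1⟩
      refine ⟨⟨g, mem_opp_of_pow hq hqp h1⟩, ?_, rfl⟩
      apply exists_inv_card hp hQp (m := q ^ k)
      · intro h2
        exact hqp ((Nat.prime_dvd_prime_iff_eq hp hq).1 (hp.dvd_of_dvd_pow h2)).symm
      · rw [← map_pow]
        have : (⟨g, mem_opp_of_pow hq hqp h1⟩ : opp p G) ^ (q ^ k) = 1 := by ext; simpa using h1
        rw [this, map_one]
    intro x
    obtain ⟨y, hy, hxy⟩ := h1 x.2
    have : y = x := Subtype.ext hxy
    rw [← this]; exact hy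
  have hfoc : ∀ x : R, x ∈ R.focalSubgroupOf := by
    intro x
    have h1 := R.transferFocal_eq_pow x
    rw [← QuotientGroup.eq_one_iff]
    apply exists_inv_card hp hQp hRi
    rw [← h1]; exact hV x
  let lam : R →* Multiplicative (ZMod p) := MonoidHom.mk' (fun x => Multiplicative.ofAdd (l x)) (by
    intro x y
    rw [← ofAdd_add, ← hl]
    · rfl
    · exact Subgroup.mem_inf.2 ⟨x.2, x.1.2⟩
    · exact Subgroup.mem_inf.2 ⟨y.2, y.1.2⟩)
  have hle : R.focalSubgroupOf ≤ lam.ker := by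
    rw [Subgroup.focalSubgroupOf_eq_closure, Subgroup.closure_le]
    rintro g ⟨x, hx, u, hgu⟩
    change Multiplicative.ofAdd (l g) = 1
    rw [ofAdd_eq_one, hgu]
    have hxR : (x : G) ∈ P ⊓ opp p G := Subgroup.mem_inf.2 ⟨hx, x.2⟩
    have hgP : ((g : opp p G) : G) ∈ P := g.2
    have hc : (u : G) * (x : G)⁻¹ * (u : G)⁻¹ ∈ P := by
      rw [hgu, commutatorElement_def] at hgP
      have := mul_mem (inv_mem hx : x⁻¹ ∈ R) (hgu ▸ g.2 : ⁅x, u⁆ ∈ R)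
      have h2 : x⁻¹ * ⁅x, u⁆ = u * x⁻¹ * u⁻¹ := by rw [commutatorElement_def]; group
      rw [h2] at this
      exact this
    obtain ⟨v, hv, hvx⟩ := h _ (inv_mem hxR) u u.2 hc
    have : ((⁅x, u⁆ : opp p G) : G) = x * (v * (x : G)⁻¹ * v⁻¹) := by
      rw [hvx, commutatorElement_def]; simp [mul_assoc]
    rw [this, hl _ hxR, hlP v hv _ (inv_mem hxR), hlinv _ hxR, add_neg_cancel]
    rw [hvx]
    exact Subgroup.mem_inf.2 ⟨hc, hopN.conj_mem _ (inv_mem hxR.2) _⟩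
  have := hle (hfoc ⟨⟨r0, hr0.2⟩, hr0.1⟩)
  exact hlr0 (ofAdd_eq_one.1 this)


theorem norm_split {p m n : ℕ} (hp : p.Prime) {G : Type*} [Group G] [Finite G]
    (hcop : Nat.Coprime (Nat.card G) (∏ i ∈ Finset.Icc 1 n, (p ^ i - 1)))
    {D : Subgroup G} (hD : Nat.card D = p ^ m) (hmn : m ≤ n)
    {T : Subgroup (Subgroup.normalizer (D : Set G))} (hT : ¬ p ∣ T.index)
    (x : Subgroup.normalizer (D : Set G)) :
    ∃ c : Subgroup.normalizer (D : Set G), (c : G) ∈ Subgroup.centralizer (D : Set G) ∧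
      ∃ t ∈ T, c * t = x := by
  have hle : opp p (Subgroup.normalizer (D : Set G)) ≤
      (Subgroup.centralizer (D : Set G)).subgroupOf (Subgroup.normalizer (D : Set G)) := by
    rw [opp, Subgroup.closure_le]
    rintro g ⟨q, k, hq, hqp, h1⟩
    change (g : G) ∈ Subgroup.centralizer (D : Set G)
    rw [Subgroup.mem_centralizer_iff]
    intro d hd
    have := cent_of_count hp hq hqp hcop (g := (g : G)) (k := k)
      (by have := congrArg Subtype.val h1; simpa using this) hD hmn
      (fun d hd => (Subgroup.mem_normalizer_iff.1 g.2 d).1 hd) d hd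
    rw [mul_inv_eq_iff_eq_mul] at this
    exact this.symm
  have hx : x ∈ opp p (Subgroup.normalizer (D : Set G)) ⊔ T := by
    rw [sup_comm, sup_opp_eq_top hp hT]; trivial
  obtain ⟨c, hc, t, ht, rfl⟩ := Subgroup.mem_sup_of_normal_left.1 hx
  exact ⟨c, hle hc, t, ht, rfl⟩

theorem lt_normalizer_inf {p : ℕ} (hp : p.Prime) {G : Type*} [Group G] [Finite G]
    {D P : Subgroup G} (hP : IsPGroup p P) (h : D < P) :
    D < P ⊓ Subgroup.normalizer (D : Set G) := by
  have := Fact.mk hp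
  have : Group.IsNilpotent P := hP.isNilpotent
  have hnc := Group.normalizerCondition_of_isNilpotent (G := P)
  have h1 : D.subgroupOf P < ⊤ := by
    rw [lt_top_iff_ne_top, Ne, Subgroup.subgroupOf_eq_top]
    exact h.not_ge
  have h2 := hnc _ h1
  refine lt_of_le_of_ne (le_inf h.le Subgroup.le_normalizer) ?_
  intro he
  obtain ⟨x, hx, hxD⟩ := SetLike.exists_of_lt h2
  apply hxD
  rw [Subgroup.mem_subgroupOf, he]
  refine Subgroup.mem_inf.2 ⟨x.2, ?_⟩
  rw [Subgroup.mem_normalizer_iff] at hx ⊢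
  intro d
  constructor
  · intro hd
    exact (hx ⟨d, h.le hd⟩).1 hd
  · intro hd
    have hdP : d ∈ P := by
      have := mul_mem (mul_mem (inv_mem x.2) (h.le hd)) x.2
      have h3 : (x : G)⁻¹ * (x * d * (x : G)⁻¹) * x = d := by group
      rwa [h3] at this
    exact (hx ⟨d, hdP⟩).2 hd

theorem sylow_conj {p n : ℕ} (hp : p.Prime) [Fact p.Prime] {G : Type*} [Group G] [Finite G]
    (hcop : Nat.Coprime (Nat.card G) (∏ i ∈ Finset.Icc 1 n, (p ^ i - 1)))
    (hsm : ∀ D : Subgroup G, IsPGroup p D → ∃ m ≤ n, Nat.card D = p ^ m) :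
    ∀ (k : ℕ) (P S : Sylow p G), Nat.card G - Nat.card (P ⊓ S : Subgroup G) < k →
      ∃ c ∈ Subgroup.centralizer ((P ⊓ S : Subgroup G) : Set G), c • P = S := by
  intro k
  induction k with
  | zero => intro P S h; omega
  | succ k ih =>
    intro P S h
    by_cases hPS : (P : Subgroup G) ≤ S
    · refine ⟨1, one_mem _, ?_⟩
      rw [one_smul]
      exact Sylow.ext (P.3 S.2 hPS).symm
    have hSP : ¬ (S : Subgroup G) ≤ P := by
      intro h'
      exact hPS (S.3 P.2 h').le
    have hlt1 : (P ⊓ S : Subgroup G) < P := lt_of_le_of_ne inf_le_left (fun h' => hPS (inf_eq_left.1 h'))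
    have hlt2 : (P ⊓ S : Subgroup G) < S := lt_of_le_of_ne inf_le_right (fun h' => hSP (inf_eq_right.1 h'))
    have hN1 := lt_normalizer_inf hp P.2 hlt1
    have hN2 := lt_normalizer_inf hp S.2 hlt2
    obtain ⟨m, hmn, hm⟩ := hsm (P ⊓ S : Subgroup G) (P.2.to_le inf_le_left)
    set D : Subgroup G := P ⊓ S with hDdef
    have hgrow : ∀ A B : Sylow p G, D < (A ⊓ B : Subgroup G) →
        ∃ c ∈ Subgroup.centralizer (D : Set G), c • A = B := by
      intro A B hAB
      have h1 : Nat.card D < Nat.card (A ⊓ B : Subgroup G) := by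
        have : (D : Set G) ⊂ ((A ⊓ B : Subgroup G) : Set G) := hAB
        exact Set.ncard_lt_ncard this
      have h2 : Nat.card (A ⊓ B : Subgroup G) ≤ Nat.card G := Subgroup.card_le_card_group _
      obtain ⟨c, hc, hc2⟩ := ih A B (by omega)
      exact ⟨c, Subgroup.centralizer_le hAB.le hc, hc2⟩
    let N := Subgroup.normalizer (D : Set G)
    obtain ⟨T1, hT1⟩ := (P.2.comap_subtype (K := N)).exists_le_sylow
    obtain ⟨T2, hT2⟩ := (S.2.comap_subtype (K := N)).exists_le_sylow
    obtain ⟨x, hx⟩ := MulAction.exists_smul_eq N T1 T2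
    obtain ⟨c, hc, t, ht, rfl⟩ := norm_split hp hcop hm hmn (T := (T1 : Subgroup N)) T1.not_dvd_index x
    rw [mul_smul, Sylow.smul_eq_iff_mem_normalizer.2 (Subgroup.le_normalizer ht)] at hx
    obtain ⟨U, hU⟩ := (T1.2.map N.subtype).exists_le_sylow
    have hD1 : D < (P ⊓ U : Subgroup G) := by
      refine lt_of_lt_of_le hN1 (le_inf inf_le_left ?_)
      intro y hy
      exact hU ⟨⟨y, hy.2⟩, hT1 hy.1, rfl⟩
    have hD2 : D < (((c : G) • U : Sylow p G) ⊓ S : Subgroup G) := by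
      refine lt_of_lt_of_le hN2 (le_inf ?_ inf_le_left)
      intro y hy
      have h1 : (⟨y, hy.2⟩ : N) ∈ T2 := hT2 hy.1
      rw [← hx] at h1
      obtain ⟨z, hz, hzy⟩ := h1
      refine ⟨z, hU ⟨z, hz, rfl⟩, ?_⟩
      exact congrArg Subtype.val hzy
    obtain ⟨c1, hc1, e1⟩ := hgrow P U hD1
    obtain ⟨c2, hc2, e2⟩ := hgrow ((c : G) • U) S hD2
    refine ⟨c2 * (c * c1), mul_mem hc2 (mul_mem hc hc1), ?_⟩
    rw [mul_smul, mul_smul, e1, e2]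

theorem frob {p m n : ℕ} (hp : p.Prime) {G : Type*} [Group G] [Finite G]
    (hcop : Nat.Coprime (Nat.card G) (∏ i ∈ Finset.Icc 1 n, (p ^ i - 1)))
    {P : Subgroup G} (hP : IsPGroup p P) (hi : ¬ p ∣ P.index)
    (hm : Nat.card P = p ^ m) (hmn : m ≤ n) : IsPNilpotent p G := by
  have := Fact.mk hp
  have hsm : ∀ D : Subgroup G, IsPGroup p D → ∃ m ≤ n, Nat.card D = p ^ m := by
    intro D hD
    obtain ⟨j, hj⟩ := IsPGroup.iff_card.1 hD
    refine ⟨j, ?_, hj⟩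
    have h1 : p ^ j ∣ p ^ m * P.index := by
      rw [← hm, P.card_mul_index, ← hj]; exact Subgroup.card_subgroup_dvd_card _
    have h2 : p ^ j ∣ p ^ m := Nat.Coprime.dvd_of_dvd_mul_right
      (Nat.Coprime.pow_left _ ((Nat.Prime.coprime_iff_not_dvd hp).2 hi)) h1
    exact ((Nat.pow_dvd_pow_iff_le_right hp.one_lt).1 h2).trans hmn
  apply stab_lemma hp hP hi
  intro x hx g hg hgx
  let PS : Sylow p G := hP.toSylow hi
  obtain ⟨c, hc, e⟩ := sylow_conj hp hcop hsm _ PS (g⁻¹ • PS) (Nat.lt_succ_self _)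
  have hxc : x ∈ ((PS ⊓ (g⁻¹ • PS : Sylow p G) : Subgroup G) : Set G) := by
    refine Subgroup.mem_inf.2 ⟨hx.1, ⟨g * x * g⁻¹, hgx, ?_⟩⟩
    simp [MulAut.conj_apply, mul_assoc]
  have hcx := Subgroup.mem_centralizer_iff.1 hc x hxc
  have hgc : g * c ∈ Subgroup.normalizer (P : Set G) := by
    have h1 : (g * c) • PS = PS := by rw [mul_smul, e, smul_inv_smul]
    exact Sylow.smul_eq_iff_mem_normalizer.1 h1
  obtain ⟨c', hc', t, ht, het⟩ := norm_split hp hcop hm hmn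
    (T := P.subgroupOf (Subgroup.normalizer (P : Set G)))
    (fun hd => hi (hd.trans (Subgroup.relIndex_dvd_index_of_le Subgroup.le_normalizer))) ⟨g * c, hgc⟩
  have het' : (c' : G) * t = g * c := congrArg Subtype.val het
  have htP : (t : G) ∈ P := ht
  refine ⟨t, htP, ?_⟩
  have h1 : g * x * g⁻¹ = (g * c) * x * (g * c)⁻¹ := by
    have : c * x * c⁻¹ = x := by rw [← hcx]; group
    calc g * x * g⁻¹ = g * (c * x * c⁻¹) * g⁻¹ := by rw [this]
      _ = _ := by group
  have h2 := Subgroup.mem_centralizer_iff.1 hc' (t * x * (t : G)⁻¹)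
    (mul_mem (mul_mem htP hx.1) (inv_mem htP))
  rw [h1, ← het']
  calc (t : G) * x * (t : G)⁻¹ = (t * x * (t : G)⁻¹) * c' * (c' : G)⁻¹ := by group
    _ = c' * (t * x * (t : G)⁻¹) * (c' : G)⁻¹ := by rw [h2]
    _ = _ := by group


theorem uhyp_map {A B : Type*} [Group A] [Group B] (f : A →* B) (hf : Function.Surjective f) :
    (UHypercenter A).map f ≤ UHypercenter B := by
  rw [Subgroup.map_le_iff_le_comap]
  refine sSup_le ?_
  rintro N ⟨hN, hch⟩
  rw [← Subgroup.map_le_iff_le_comap]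
  refine le_sSup ⟨hN.map f hf, ?_⟩
  rintro A1 B1 ⟨hA1, hB1, hlt, hmin⟩ hle
  have hmapA : (A1.comap f ⊓ N).map f = A1 := by
    apply le_antisymm
    · rintro _ ⟨x, hx, rfl⟩
      exact hx.1
    · intro y hy
      obtain ⟨x, hx, rfl⟩ := hle hy
      exact ⟨x, Subgroup.mem_inf.2 ⟨hy, hx⟩, rfl⟩
  have hBA : B1.comap f ⊓ N ≤ A1.comap f ⊓ N :=
    inf_le_inf_right _ (Subgroup.comap_mono hlt.le)
  have hmapB : (B1.comap f ⊓ N).map f ≤ B1 := by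
    rintro _ ⟨x, hx, rfl⟩
    exact hx.1
  have hchief : IsChiefFactor (A1.comap f ⊓ N) (B1.comap f ⊓ N) := by
    have i1 := hA1.comap f
    have i2 := hB1.comap f
    refine ⟨inferInstance, inferInstance, lt_of_le_of_ne hBA ?_, ?_⟩
    · intro h
      apply hlt.not_ge
      rw [← hmapA, ← h]; exact hmapB
    · intro L hL h1 h2
      have hLA : L.map f ≤ A1 := by rw [← hmapA]; exact Subgroup.map_mono h2.le
      have hBL : B1 ≤ L.map f := by
        intro y hy
        obtain ⟨x, hx, rfl⟩ := hle (hlt.le hy)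
        exact ⟨x, h1.le (Subgroup.mem_inf.2 ⟨hy, hx⟩), rfl⟩
      refine hmin (L.map f) (hL.map f hf) (lt_of_le_of_ne hBL ?_) (lt_of_le_of_ne hLA ?_)
      · intro h
        apply h1.not_ge
        refine le_inf ?_ (h2.le.trans inf_le_right)
        rw [← Subgroup.map_le_iff_le_comap, ← h]
      · intro h
        apply h2.not_ge
        intro x hx
        have hx1 : f x ∈ L.map f := by rw [h]; exact hx.1
        obtain ⟨y, hy, hyx⟩ := hx1
        have hk : y⁻¹ * x ∈ B1.comap f ⊓ N := by
          refine Subgroup.mem_inf.2 ⟨?_, mul_mem (inv_mem (h2.le hy).2) hx.2⟩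
          rw [Subgroup.mem_comap, map_mul, map_inv, hyx, inv_mul_cancel]
          exact one_mem _
        have := mul_mem hy (h1.le hk)
        rwa [mul_inv_cancel_left] at this
  have := hch _ _ hchief inf_le_right
  have e : (B1.comap f ⊓ N).relIndex (A1.comap f ⊓ N) = B1.relIndex A1 := by
    conv_rhs => rw [← hmapA, ← Subgroup.relIndex_comap]
    unfold Subgroup.relIndex
    congr 1
    ext x
    simp only [Subgroup.mem_subgroupOf, Subgroup.mem_inf, and_iff_left_iff_imp]
    intro _
    exact x.2.2
  rwa [e] at this

theorem mem_sup_of_perm {G : Type*} [Group G] {H Q : Subgroup G}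
    (h : (H : Set G) * (Q : Set G) = (Q : Set G) * (H : Set G)) {x : G} (hx : x ∈ H ⊔ Q) :
    ∃ a ∈ H, ∃ b ∈ Q, a * b = x := by
  let S : Subgroup G :=
    { carrier := (H : Set G) * (Q : Set G)
      one_mem' := ⟨1, one_mem H, 1, one_mem Q, by simp⟩
      mul_mem' := by
        rintro _ _ ⟨a, ha, b, hb, rfl⟩ ⟨c, hc, d, hd, rfl⟩
        have : b * c ∈ (H : Set G) * (Q : Set G) := by rw [h]; exact ⟨b, hb, c, hc, rfl⟩
        obtain ⟨e, he, f, hf, hef⟩ := this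
        refine ⟨a * e, mul_mem ha he, f * d, mul_mem hf hd, ?_⟩
        have hef' : e * f = b * c := hef
        change a * e * (f * d) = a * b * (c * d)
        calc a * e * (f * d) = a * (e * f) * d := by group
          _ = _ := by rw [hef']; group
      inv_mem' := by
        rintro _ ⟨a, ha, b, hb, rfl⟩
        change (a * b)⁻¹ ∈ (H : Set G) * (Q : Set G)
        rw [h, mul_inv_rev]
        exact ⟨b⁻¹, inv_mem hb, a⁻¹, inv_mem ha, rfl⟩ }
  have hle : H ⊔ Q ≤ S := by
    refine sup_le ?_ ?_
    · intro a ha; exact ⟨a, ha, 1, one_mem Q, by simp⟩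
    · intro b hb; exact ⟨1, one_mem H, b, hb, by simp⟩
  obtain ⟨a, ha, b, hb, e⟩ := hle hx
  exact ⟨a, ha, b, hb, e⟩

theorem perm_relIndex_dvd {G : Type*} [Group G] [Finite G] {H Q : Subgroup G}
    (h : (H : Set G) * (Q : Set G) = (Q : Set G) * (H : Set G)) :
    Q.relIndex (H ⊔ Q) ∣ Nat.card H := by
  have h1 : ((H.subgroupOf (H ⊔ Q) : Subgroup _) : Set (H ⊔ Q : Subgroup G)) *
      ((Q.subgroupOf (H ⊔ Q) : Subgroup _) : Set (H ⊔ Q : Subgroup G)) = Set.univ := by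
    rw [Set.eq_univ_iff_forall]
    rintro ⟨x, hx⟩
    obtain ⟨a, ha, b, hb, rfl⟩ := mem_sup_of_perm h hx
    exact ⟨⟨a, le_sup_left (a := H) ha⟩, ha, ⟨b, le_sup_right (b := Q) hb⟩, hb, rfl⟩
  have := index_dvd_of_mul h1
  rwa [Nat.card_congr (Subgroup.subgroupOfEquivOfLe (le_sup_left : H ≤ H ⊔ Q)).toEquiv] at this

theorem sperm_le_core {p : ℕ} (hp : p.Prime) {G : Type*} [Group G] [Finite G] {P H : Subgroup G}
    (hP : IsPGroup p P) (hi : ¬ p ∣ P.index) (hH : IsPGroup p H) (hs : SPermutable H) :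
    H ≤ P.normalCore := by
  have := Fact.mk hp
  have key : ∀ Q : Sylow p G, H ≤ Q := by
    intro Q
    have h1 := hs p hp Q (isSylowIn_iff.2 ⟨Q.2, Q.not_dvd_index⟩)
    have h2 := perm_relIndex_dvd h1
    obtain ⟨k, hk⟩ := IsPGroup.iff_card.1 hH
    have h3 : (Q : Subgroup G).relIndex (H ⊔ Q) ∣ (Q : Subgroup G).index :=
      Subgroup.relIndex_dvd_index_of_le le_sup_right
    have h4 : (Q : Subgroup G).relIndex (H ⊔ Q) = 1 := by
      have hco : Nat.Coprime (p ^ k) (Q : Subgroup G).index :=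
        Nat.Coprime.pow_left _ ((Nat.Prime.coprime_iff_not_dvd hp).2 Q.not_dvd_index)
      rw [hk] at h2
      have h5 := Nat.dvd_gcd h2 h3
      rw [hco] at h5
      exact Nat.dvd_one.1 h5
    exact le_sup_left.trans (Subgroup.relIndex_eq_one.1 h4)
  intro h hh b
  let PS : Sylow p G := hP.toSylow hi
  obtain ⟨z, hz, e⟩ := key (b⁻¹ • PS) hh
  have e' : b⁻¹ * z * (b⁻¹)⁻¹ = h := e
  have : b * h * b⁻¹ = z := by rw [← e']; group
  rw [this]; exact hz

theorem sperm_norm {p : ℕ} (hp : p.Prime) {G : Type*} [Group G] [Finite G] {P H : Subgroup G}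
    (hP : IsPGroup p P) (hi : ¬ p ∣ P.index) (hH : IsPGroup p H) (hs : SPermutable H)
    {q k : ℕ} (hq : q.Prime) (hqp : q ≠ p) {g : G} (hg : g ^ (q ^ k) = 1) :
    ∀ h ∈ H, g * h * g⁻¹ ∈ H := by
  have := Fact.mk hq
  intro h hh
  have hO := sperm_le_core hp hP hi hH hs
  have hz : IsPGroup q (Subgroup.zpowers g) := by
    rintro ⟨x, j, rfl⟩
    refine ⟨k, ?_⟩
    ext1
    simp only [Subgroup.coe_pow, Subgroup.coe_one]
    rw [← zpow_natCast, ← zpow_mul, mul_comm, zpow_mul, zpow_natCast, hg, one_zpow]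
  obtain ⟨Q, hQ⟩ := hz.exists_le_sylow
  have hgQ : g ∈ (Q : Subgroup G) := hQ (Subgroup.mem_zpowers g)
  have h1 := hs q hq Q (isSylowIn_iff.2 ⟨Q.2, Q.not_dvd_index⟩)
  have hx : g * h * g⁻¹ ∈ H ⊔ (Q : Subgroup G) :=
    mul_mem (mul_mem (le_sup_right (a := H) hgQ) (le_sup_left (a := H) hh))
      (inv_mem (le_sup_right (a := H) hgQ))
  obtain ⟨a, ha, b, hb, e⟩ := mem_sup_of_perm h1 hx
  have hbO : b ∈ P.normalCore := by
    have h2 : g * h * g⁻¹ ∈ P.normalCore :=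
      (inferInstance : P.normalCore.Normal).conj_mem _ (hO hh) _
    rw [← e] at h2
    have := mul_mem (inv_mem (hO ha)) h2
    rwa [inv_mul_cancel_left] at this
  have hbP := P.normalCore_le hbO
  have hb1 : b = 1 := by
    obtain ⟨j, hj⟩ := Q.2 ⟨b, hb⟩
    have hj' : b ^ (q ^ j) = 1 := congrArg Subtype.val hj
    have := exists_inv_card hp hP (m := q ^ j) (x := ⟨b, hbP⟩)
      (fun h2 => hqp ((Nat.prime_dvd_prime_iff_eq hp hq).1 (hp.dvd_of_dvd_pow h2)).symm)
      (by ext; simpa using hj')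
    exact congrArg Subtype.val this
  rw [← e, hb1, mul_one]; exact ha

theorem nmax {p : ℕ} (hp : p.Prime) {G : Type*} [Group G] [Finite G] {P : Subgroup G}
    (hP : IsPGroup p P) : ∀ (n : ℕ) (H : Subgroup G), H ≤ P → Nat.card H * p ^ n = Nat.card P →
      IsNMaximalIn n H P := by
  have := Fact.mk hp
  intro n
  induction n with
  | zero =>
    intro H hH hc
    have : H = P := by
      apply Subgroup.eq_of_le_of_card_ge hH
      rw [← hc]; simp
    subst this
    exact ⟨fun _ => H, rfl, rfl, fun i => i.elim0⟩
  | succ n ih =>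
    intro H hH hc
    obtain ⟨a, ha⟩ := IsPGroup.iff_card.1 (hP.to_le hH)
    have hHs : Nat.card (H.subgroupOf P) = p ^ a := by
      rw [Nat.card_congr (Subgroup.subgroupOfEquivOfLe hH).toEquiv, ha]
    obtain ⟨K, hK, hHK⟩ := Sylow.exists_subgroup_card_pow_succ (p := p) (G := P) (n := a)
      (by rw [← hc, ha, ← pow_add]; exact pow_dvd_pow _ (by omega)) hHs
    have hKc : Nat.card (K.map P.subtype) = p ^ (a + 1) := by
      rw [Subgroup.card_map_of_injective P.subtype_injective, hK]
    have hHK' : H ≤ K.map P.subtype := fun x hx => ⟨⟨x, hH hx⟩, hHK hx, rfl⟩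
    obtain ⟨c, c0, cl, hcm⟩ := ih (K.map P.subtype) (Subgroup.map_subtype_le K) (by
      rw [hKc, ← hc, ha, ← pow_add, ← pow_add]; congr 1; omega)
    have hmax : IsMaximalIn H (K.map P.subtype) := by
      refine ⟨lt_of_le_of_ne hHK' ?_, ?_⟩
      · intro h
        rw [← h, ha] at hKc
        have := Nat.pow_right_injective hp.two_le hKc
        omega
      · intro L h1 h2
        apply Subgroup.eq_of_le_of_card_ge h2
        have h3 : Nat.card L ∣ p ^ (a + 1) := hKc ▸ Subgroup.card_dvd_of_le h2
        obtain ⟨j, hj, hLj⟩ := (Nat.dvd_prime_pow hp).1 h3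
        have h4 : Nat.card H < Nat.card L := by
          have : (H : Set G) ⊂ (L : Set G) := h1
          exact Set.ncard_lt_ncard this
        rw [ha, hLj] at h4
        have h5 := (Nat.pow_lt_pow_iff_right hp.one_lt).1 h4
        have : j = a + 1 := by omega
        rw [hKc, hLj, this]
    refine ⟨Fin.snoc c H, ?_, ?_, ?_⟩
    · have : (0 : Fin (n + 2)) = Fin.castSucc 0 := rfl
      rw [this, Fin.snoc_castSucc, c0]
    · rw [Fin.snoc_last]
    · intro i
      refine Fin.lastCases ?_ (fun j => ?_) i
      · rw [Fin.succ_last, Fin.snoc_last, Fin.snoc_castSucc, cl]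
        exact hmax
      · rw [Fin.succ_castSucc, Fin.snoc_castSucc, Fin.snoc_castSucc]
        exact hcm j


/-- order version of the hypothesis -/
def HypN (p n : ℕ) {G : Type*} [Group G] (P : Subgroup G) : Prop :=
  ∀ H : Subgroup G, H ≤ P → Nat.card H * p ^ n = Nat.card P →
    HasPNilpotentSupplement p H ∨ UsQuasinormal H

theorem card_map_mul {G B : Type*} [Group G] [Group B] (f : G →* B) (A : Subgroup G) :
    Nat.card (A.map f) * Nat.card (A ⊓ f.ker : Subgroup G) = Nat.card A := by
  have h1 := (f.comp A.subtype).ker.card_mul_index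
  rw [Subgroup.index_ker, MonoidHom.range_comp, Subgroup.range_subtype] at h1
  have h2 : (f.comp A.subtype).ker.map A.subtype = A ⊓ f.ker := by
    ext x
    constructor
    · rintro ⟨y, hy, rfl⟩
      exact Subgroup.mem_inf.2 ⟨y.2, hy⟩
    · intro hx
      exact ⟨⟨x, hx.1⟩, hx.2, rfl⟩
  rw [← h2, Subgroup.card_map_of_injective A.subtype_injective, mul_comm, h1]

theorem pnil_map {p : ℕ} (hp : p.Prime) {A B : Type*} [Group A] [Group B]
    (f : A →* B) (hf : Function.Surjective f) (h : IsPNilpotent p A) : IsPNilpotent p B := by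
  obtain ⟨W, hW, hc, k, hk⟩ := h
  refine ⟨W.map f, hW.map f hf, ?_, ?_⟩
  · exact Nat.Coprime.coprime_dvd_left (Subgroup.card_map_dvd W f) hc
  · have : (W.map f).index ∣ p ^ k := hk ▸ W.index_map_dvd hf
    obtain ⟨j, -, hj⟩ := (Nat.dvd_prime_pow hp).1 this
    exact ⟨j, hj⟩

theorem sperm_map {G B : Type*} [Group G] [Finite G] [Group B] (f : G →* B)
    (hf : Function.Surjective f) {A : Subgroup G} (h : SPermutable A) : SPermutable (A.map f) := by
  have : Finite B := Finite.of_surjective f hf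
  intro q hq Q hQ
  have := Fact.mk hq
  obtain ⟨hQ1, hQ2⟩ := isSylowIn_iff.1 hQ
  obtain ⟨S, hS⟩ := Sylow.mapSurjective_surjective hf q (hQ1.toSylow hQ2)
  have h1 : (S : Subgroup G).map f = Q := by
    have := congrArg (fun X : Sylow q B => (X : Subgroup B)) hS
    simpa using this
  have h2 := h q hq S (isSylowIn_iff.2 ⟨S.2, S.not_dvd_index⟩)
  have h3 := congrArg (fun X : Set G => f '' X) h2
  simp only [Set.image_mul] at h3
  rw [← h1, Subgroup.coe_map, Subgroup.coe_map]
  exact h3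

theorem hyp_quot {p n : ℕ} (hp : p.Prime) {G B : Type*} [Group G] [Finite G] [Group B] (f : G →* B)
    (hf : Function.Surjective f) {P : Subgroup G} (hP : IsPGroup p P)
    (hL : f.ker ≤ P ∨ ¬ p ∣ Nat.card f.ker) (h : HypN p n P) : HypN p n (P.map f) := by
  intro X hX hc
  let H : Subgroup G := P ⊓ X.comap f
  have hmem : ∀ x, x ∈ H ↔ x ∈ P ∧ f x ∈ X := fun x => Subgroup.mem_inf
  have hHX : H.map f = X := by
    apply le_antisymm
    · rintro _ ⟨x, hx, rfl⟩
      exact ((hmem x).1 hx).2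
    · intro y hy
      obtain ⟨x, hx, rfl⟩ := hX hy
      exact ⟨x, (hmem x).2 ⟨hx, hy⟩, rfl⟩
  have hHk : H ⊓ f.ker = P ⊓ f.ker := by
    ext x
    simp only [Subgroup.mem_inf, hmem, MonoidHom.mem_ker]
    constructor
    · rintro ⟨⟨a, -⟩, b⟩; exact ⟨a, b⟩
    · rintro ⟨a, b⟩; exact ⟨⟨a, b ▸ one_mem X⟩, b⟩
  have hcH : Nat.card H * p ^ n = Nat.card P := by
    rw [← card_map_mul f H, hHk, hHX, ← card_map_mul f P, ← hc]; ring
  rcases h H inf_le_left hcH with ⟨T, hT, hHT⟩ | ⟨T, hT, hs, hx⟩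
  · left
    refine ⟨T.map f, pnil_map hp (f.subgroupMap T) (f.subgroupMap_surjective T) hT, ?_⟩
    rw [Set.eq_univ_iff_forall]
    intro y
    obtain ⟨g, rfl⟩ := hf y
    have hg : g ∈ (H : Set G) * (T : Set G) := by rw [hHT]; trivial
    obtain ⟨a, ha, b, hb, rfl⟩ := hg
    exact ⟨f a, ((hmem a).1 ha).2, f b, ⟨b, hb, rfl⟩, (map_mul f a b).symm⟩
  · right
    refine ⟨T.map f, hT.map f hf, ?_, ?_⟩
    · rw [← hHX, ← Subgroup.map_sup]
      exact sperm_map f hf hs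
    · intro x hxX
      have hlift : ∃ a ∈ H ⊓ T, f a = x := by
        obtain ⟨hx1, t, ht, htx⟩ := Subgroup.mem_inf.1 hxX
        rw [← hHX] at hx1
        obtain ⟨a, ha, hax⟩ := hx1
        have hk : a⁻¹ * t ∈ f.ker := by
          rw [MonoidHom.mem_ker, map_mul, map_inv, hax, htx, inv_mul_cancel]
        rcases hL with hL | hL
        · refine ⟨t, Subgroup.mem_inf.2 ⟨(hmem t).2 ⟨?_, ?_⟩, ht⟩, htx⟩
          · have := mul_mem ((hmem a).1 ha).1 (hL hk)
            rwa [mul_inv_cancel_left] at this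
          · rw [htx, ← hax]; exact ((hmem a).1 ha).2
        · refine ⟨a, Subgroup.mem_inf.2 ⟨ha, ?_⟩, hax⟩
          have hPp : IsPGroup p (P.map (QuotientGroup.mk' T)) := hP.map _
          have haT : (QuotientGroup.mk' T a) ∈ P.map (QuotientGroup.mk' T) :=
            ⟨a, ((hmem a).1 ha).1, rfl⟩
          have h1 : ((a⁻¹ * t : G) : G ⧸ T) ^ (Nat.card f.ker) = 1 := by
            have h2 : (⟨a⁻¹ * t, hk⟩ : f.ker) ^ (Nat.card f.ker) = 1 := pow_card_eq_one'
            have h3 : (a⁻¹ * t) ^ (Nat.card f.ker) = 1 := congrArg Subtype.val h2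
            rw [← QuotientGroup.mk_pow, h3]; rfl
          have h2 : ((a⁻¹ * t : G) : G ⧸ T) = (a : G ⧸ T)⁻¹ := by
            rw [QuotientGroup.mk_mul, (QuotientGroup.eq_one_iff t).2 ht, mul_one]; rfl
          rw [h2, inv_pow, inv_eq_one] at h1
          have h3 := exists_inv_card hp hPp hL (x := ⟨QuotientGroup.mk' T a, haT⟩)
            (by ext; exact h1)
          have h4 : (a : G ⧸ T) = 1 := congrArg Subtype.val h3
          exact (QuotientGroup.eq_one_iff a).1 h4
      obtain ⟨a, ha, rfl⟩ := hlift
      have hcore : H.normalCore ≤ X.normalCore.comap f := by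
        intro y hy b
        obtain ⟨g, rfl⟩ := hf b
        have := ((hmem _).1 (hy g)).2
        simpa using this
      let φ := QuotientGroup.map H.normalCore X.normalCore f hcore
      have hφ : Function.Surjective φ := by
        intro z
        obtain ⟨b, rfl⟩ := QuotientGroup.mk_surjective z
        obtain ⟨g, rfl⟩ := hf b
        exact ⟨(g : G ⧸ H.normalCore), rfl⟩
      exact uhyp_map φ hφ ⟨_, hx a ha, rfl⟩


theorem pnil_of_quot {p : ℕ} (hp : p.Prime) {G : Type*} [Group G] [Finite G] {L : Subgroup G}
    [hL : L.Normal] (hLp : ¬ p ∣ Nat.card L) (h : IsPNilpotent p (G ⧸ L)) : IsPNilpotent p G := by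
  obtain ⟨W, hW, hc, k, hk⟩ := h
  refine ⟨W.comap (QuotientGroup.mk' L), hW.comap _, ?_, k, ?_⟩
  · have h1 := card_map_mul (QuotientGroup.mk' L) (W.comap (QuotientGroup.mk' L))
    rw [Subgroup.map_comap_eq_self_of_surjective (QuotientGroup.mk'_surjective L)] at h1
    have h2 : (W.comap (QuotientGroup.mk' L)) ⊓ (QuotientGroup.mk' L).ker = L := by
      rw [QuotientGroup.ker_mk']
      refine inf_eq_right.2 ?_
      intro x hx
      rw [Subgroup.mem_comap, QuotientGroup.mk'_apply, (QuotientGroup.eq_one_iff x).2 hx]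
      exact one_mem _
    rw [h2] at h1
    rw [← h1]
    exact Nat.Coprime.mul_left hc ((Nat.Prime.coprime_iff_not_dvd hp).2 hLp).symm
  · rw [Subgroup.index_comap_of_surjective _ (QuotientGroup.mk'_surjective L), hk]

theorem inf_opp_le_of_quot {p : ℕ} (hp : p.Prime) {G : Type*} [Group G] [Finite G]
    {P L : Subgroup G} (hP : IsPGroup p P)
    [hL : L.Normal] (h : IsPNilpotent p (G ⧸ L)) : P ⊓ opp p G ≤ L := by
  rw [pnil_iff hp] at h
  intro x hx
  have h1 : (x : G ⧸ L) ∈ opp p (G ⧸ L) := opp_map_le (QuotientGroup.mk' L) ⟨x, hx.2, rfl⟩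
  have h2 : (x : G ⧸ L) ∈ P.map (QuotientGroup.mk' L) := ⟨x, hx.1, rfl⟩
  have h3 : (⟨(x : G ⧸ L), h1⟩ : opp p (G ⧸ L)) ^ (Nat.card (opp p (G ⧸ L))) = 1 := pow_card_eq_one'
  have h4 : (x : G ⧸ L) ^ (Nat.card (opp p (G ⧸ L))) = 1 := congrArg Subtype.val h3
  have h5 := exists_inv_card hp (hP.map (QuotientGroup.mk' L)) h (x := ⟨(x : G ⧸ L), h2⟩)
    (by ext; exact h4)
  exact (QuotientGroup.eq_one_iff x).1 (congrArg Subtype.val h5)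

theorem pnil_of_small {p n j : ℕ} (hp : p.Prime) {G : Type*} [Group G] [Finite G]
    (hcop : Nat.Coprime (Nat.card G) (∏ i ∈ Finset.Icc 1 n, (p ^ i - 1)))
    {P L : Subgroup G} (hP : IsPGroup p P) (hi : ¬ p ∣ P.index)
    (hL : L.Normal) (hj : Nat.card L = p ^ j) (hjn : j ≤ n) (h : P ⊓ opp p G ≤ L) :
    IsPNilpotent p G := by
  have hle : opp p G ≤ Subgroup.centralizer (L : Set G) := by
    rw [opp, Subgroup.closure_le]
    rintro g ⟨q, k, hq, hqp, h1⟩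
    change (g : G) ∈ Subgroup.centralizer (L : Set G)
    rw [Subgroup.mem_centralizer_iff]
    intro d hd
    have := cent_of_count hp hq hqp hcop h1 hj hjn (fun d hd => hL.conj_mem d hd g) d hd
    rw [mul_inv_eq_iff_eq_mul] at this
    exact this.symm
  apply stab_lemma hp hP hi
  intro x hx g hg _
  refine ⟨1, one_mem _, ?_⟩
  have := Subgroup.mem_centralizer_iff.1 (hle hg) x (h hx)
  rw [← this]; simp

theorem exists_min_normal {G : Type*} [Group G] [Finite G] {N : Subgroup G} (hN : N.Normal)
    (h : N ≠ ⊥) : ∃ L ≤ N, L.Normal ∧ L ≠ ⊥ ∧ ∀ X : Subgroup G, X.Normal → X ≤ L → X ≠ ⊥ → X = L := by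
  obtain ⟨L, hLN, hmin⟩ := (Set.toFinite {X : Subgroup G | X.Normal ∧ X ≠ ⊥}).exists_le_minimal
    (a := N) ⟨hN, h⟩
  exact ⟨L, hLN, hmin.1.1, hmin.1.2, fun X hX hXL hX0 => le_antisymm hXL (hmin.2 ⟨hX, hX0⟩ hXL)⟩

theorem uhyp_prime {G : Type*} [Group G] [Finite G] {a : G} (ha : a ∈ UHypercenter G) (ha1 : a ≠ 1) :
    ∃ L : Subgroup G, L.Normal ∧ L ≠ ⊥ ∧ (∀ X : Subgroup G, X.Normal → X ≤ L → X ≠ ⊥ → X = L) ∧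
      (Nat.card L).Prime := by
  have hex : ∃ N : Subgroup G, N ≠ ⊥ ∧ N.Normal ∧
      ∀ A B : Subgroup G, IsChiefFactor A B → A ≤ N → (B.relIndex A).Prime := by
    by_contra hcon
    push Not at hcon
    have : UHypercenter G ≤ ⊥ := by
      refine sSup_le ?_
      rintro N ⟨hN, hN2⟩
      by_contra hb
      obtain ⟨A, B, h1, h2, h3⟩ := hcon N (fun h => hb h.le) hN
      exact h3 (hN2 A B h1 h2)
    exact ha1 (Subgroup.mem_bot.1 (this ha))
  obtain ⟨N, hN0, hN, hch⟩ := hex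
  obtain ⟨L, hLN, hL, hL0, hmin⟩ := exists_min_normal hN hN0
  refine ⟨L, hL, hL0, hmin, ?_⟩
  have := hch L ⊥ ⟨hL, inferInstance, bot_lt_iff_ne_bot.2 hL0,
    fun X hX h1 h2 => h2.ne (hmin X hX h2.le h1.ne')⟩ hLN
  rwa [Subgroup.relIndex_bot_left] at this

theorem mem_uhyp_of_core {G : Type*} [Group G] {H : Subgroup G} (hc : H.normalCore = ⊥) {x : G}
    (hx : (QuotientGroup.mk x : G ⧸ H.normalCore) ∈ UHypercenter (G ⧸ H.normalCore)) :
    x ∈ UHypercenter G := by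
  let φ : G ⧸ H.normalCore →* G := QuotientGroup.lift H.normalCore (MonoidHom.id G) (by
    intro y hy; rw [hc] at hy; exact hy)
  have hφ : Function.Surjective φ := fun y => ⟨(y : G ⧸ H.normalCore), rfl⟩
  exact uhyp_map φ hφ ⟨_, hx, rfl⟩

theorem card_mul_le {G : Type*} [Group G] [Finite G] {A B P : Subgroup G} (hA : A ≤ P) (hB : B ≤ P)
    (h : A ⊓ B = ⊥) : Nat.card A * Nat.card B ≤ Nat.card P := by
  rw [← Nat.card_prod]
  have hinj := Subgroup.mul_injective_of_disjoint (disjoint_iff.2 h)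
  refine Nat.card_le_card_of_injective
    (fun x : A × B => (⟨x.1 * x.2, mul_mem (hA x.1.2) (hB x.2.2)⟩ : P)) ?_
  intro x y hxy
  exact hinj (congrArg Subtype.val hxy)

theorem normal_p_le {p : ℕ} (hp : p.Prime) {G : Type*} [Group G] [Finite G] {P X : Subgroup G}
    (hP : IsPGroup p P) (hi : ¬ p ∣ P.index) (hX : X.Normal) (hXp : IsPGroup p X) : X ≤ P := by
  have := Fact.mk hp
  have h1 : IsPGroup p (P ⊔ X : Subgroup G) := hP.to_sup_of_normal_right hXp
  have h2 : P ⊔ X = P := (hP.toSylow hi).3 h1 le_sup_left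
  rw [← h2]; exact le_sup_right

theorem min_normal_exp {p : ℕ} (hp : p.Prime) {G : Type*} [Group G] [Finite G] {L : Subgroup G}
    (hL : L.Normal) (hLp : IsPGroup p L) (hL0 : L ≠ ⊥)
    (hmin : ∀ X : Subgroup G, X.Normal → X ≤ L → X ≠ ⊥ → X = L) : ∀ x ∈ L, x ^ p = 1 := by
  have := Fact.mk hp
  let W : Subgroup G :=
    { carrier := {x | x ∈ L ∧ (∀ y ∈ L, x * y = y * x) ∧ x ^ p = 1}
      one_mem' := ⟨one_mem _, by simp, by simp⟩
      mul_mem' := by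
        rintro a b ⟨ha, ha2, ha3⟩ ⟨hb, hb2, hb3⟩
        refine ⟨mul_mem ha hb, ?_, ?_⟩
        · intro y hy
          rw [mul_assoc, hb2 y hy, ← mul_assoc, ha2 y hy, mul_assoc]
        · rw [(show Commute a b from ha2 b hb).mul_pow, ha3, hb3, one_mul]
      inv_mem' := by
        rintro a ⟨ha, ha2, ha3⟩
        refine ⟨inv_mem ha, ?_, by rw [inv_pow, ha3, inv_one]⟩
        intro y hy
        exact (show Commute a y from ha2 y hy).inv_left }
  have hWL : W ≤ L := fun x hx => hx.1
  have hWN : W.Normal := by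
    constructor
    rintro x ⟨hx, hx2, hx3⟩ g
    refine ⟨hL.conj_mem x hx g, ?_, ?_⟩
    · intro y hy
      have h1 := hx2 (g⁻¹ * y * g) (by simpa using hL.conj_mem y hy g⁻¹)
      calc g * x * g⁻¹ * y = g * (x * (g⁻¹ * y * g)) * g⁻¹ := by group
        _ = g * ((g⁻¹ * y * g) * x) * g⁻¹ := by rw [h1]
        _ = y * (g * x * g⁻¹) := by group
    · rw [conj_pow, hx3]; simp
  have hW0 : W ≠ ⊥ := by
    have hnt : Nontrivial L := (Subgroup.nontrivial_iff_ne_bot L).2 hL0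
    have hz := hLp.center_nontrivial
    obtain ⟨k, hk⟩ := IsPGroup.iff_card.1 (hLp.to_subgroup (Subgroup.center L))
    have hd : p ∣ Nat.card (Subgroup.center L) := by
      rw [hk]
      refine dvd_pow_self _ ?_
      rintro rfl
      have := Finite.one_lt_card (α := Subgroup.center L)
      rw [hk, pow_zero] at this
      omega
    obtain ⟨z, hz⟩ := exists_prime_orderOf_dvd_card' p hd
    intro h
    have hzW : ((z : L) : G) ∈ W := by
      refine ⟨z.1.2, ?_, ?_⟩
      · intro y hy
        have := Subgroup.mem_center_iff.1 z.2 ⟨y, hy⟩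
        exact (congrArg Subtype.val this).symm
      · have := pow_orderOf_eq_one z
        rw [hz] at this
        have h2 := congrArg (fun t : Subgroup.center L => ((t : L) : G)) this
        simpa using h2
    rw [h, Subgroup.mem_bot] at hzW
    have hz1 : z = 1 := Subtype.ext (Subtype.ext hzW)
    rw [hz1, orderOf_one] at hz
    exact hp.one_lt.ne hz
  have := hmin W hWN hWL hW0
  intro x hx
  rw [← this] at hx
  exact hx.2.2


theorem main_step {p n : ℕ} (hp : p.Prime) (hn : 1 ≤ n) {G : Type*} [Group G] [Finite G]
    (hcop : Nat.Coprime (Nat.card G) (∏ i ∈ Finset.Icc 1 n, (p ^ i - 1)))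
    {P : Subgroup G} (hP : IsPGroup p P) (hi : ¬ p ∣ P.index) (hyp : HypN p n P)
    (hq : ∀ L : Subgroup G, ∀ _ : L.Normal, L ≠ ⊥ → (L ≤ P ∨ ¬ p ∣ Nat.card L) →
      IsPNilpotent p (G ⧸ L)) : IsPNilpotent p G := by
  have := Fact.mk hp
  obtain ⟨m, hm⟩ := IsPGroup.iff_card.1 hP
  by_cases hmn : m ≤ n
  · exact frob hp hcop hP hi hm hmn
  push Not at hmn
  by_contra hnot
  have hR : P ⊓ opp p G ≠ ⊥ := fun h => hnot (pnil_of_inf_eq_bot hp hP hi h)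
  obtain ⟨M, hMP, hMn, hMc, hRM, hMK⟩ := key_lemma hp hP hi hR
  have hMc' : Nat.card M = p ^ (m - 1) := by
    have h1 : p ^ (m - 1) * p = p ^ m := by rw [← pow_succ]; congr 1; omega
    rw [hm, ← h1] at hMc
    exact Nat.eq_of_mul_eq_mul_right hp.pos hMc
  have hxM : ∃ x ∈ P, x ∉ M := by
    by_contra hcon
    push Not at hcon
    exact hRM (fun x hx => hcon x hx.1)
  have hUs : ∀ H ≤ M, Nat.card H = p ^ (m - n) → UsQuasinormal H := by
    intro H hH hc
    rcases hyp H (hH.trans hMP) (by rw [hc, hm, ← pow_add]; congr 1; omega) with h | h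
    · exact absurd h (no_supplement hp hP hi hMP hH hxM hMK)
    · exact h
  have hp' : ∀ L : Subgroup G, L.Normal → ¬ p ∣ Nat.card L → L = ⊥ := by
    intro L hL h
    by_contra h0
    exact hnot (pnil_of_quot hp h (hq L hL h0 (Or.inr h)))
  have hpR : ∀ L : Subgroup G, L.Normal → L ≤ P → L ≠ ⊥ → P ⊓ opp p G ≤ L := by
    intro L hL h h0
    exact inf_opp_le_of_quot hp hP (hq L hL h0 (Or.inl h))
  have hcore : ∀ H ≤ M, H.normalCore = ⊥ := by
    intro H hH
    by_contra h0
    exact hRM ((hpR H.normalCore inferInstance ((H.normalCore_le.trans hH).trans hMP) h0).trans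
      (H.normalCore_le.trans hH))
  have exH : ∀ a ∈ M, a ^ p = 1 → ∃ H ≤ M, a ∈ H ∧ Nat.card H = p ^ (m - n) := by
    intro a ha hap
    have h1 : orderOf (⟨a, ha⟩ : M) ∣ p ^ 1 := by
      rw [pow_one]; apply orderOf_dvd_of_pow_eq_one; ext; simpa using hap
    obtain ⟨i, hi1, hio⟩ := (Nat.dvd_prime_pow hp).1 h1
    obtain ⟨K, hK, hzK⟩ := Sylow.exists_subgroup_card_pow_prime_le p (G := M) (n := i) (m := m - n)
      (by rw [hMc']; exact pow_dvd_pow _ (by omega)) (Subgroup.zpowers (⟨a, ha⟩ : M))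
      (by rw [Nat.card_zpowers, hio]) (by omega)
    refine ⟨K.map M.subtype, Subgroup.map_subtype_le K, ⟨⟨a, ha⟩, hzK (Subgroup.mem_zpowers _), rfl⟩, ?_⟩
    rw [Subgroup.card_map_of_injective M.subtype_injective, hK]
  by_cases hex : ∃ L0 : Subgroup G, L0.Normal ∧ L0 ≤ P ∧ L0 ≠ ⊥
  · obtain ⟨L0, hL0, hL0P, hL00⟩ := hex
    obtain ⟨L, hLL, hL, hL1, hmin⟩ := exists_min_normal hL0 hL00
    have hLP : L ≤ P := hLL.trans hL0P
    have hLp : IsPGroup p L := hP.to_le hLP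
    have hRL := hpR L hL hLP hL1
    obtain ⟨j, hj⟩ := IsPGroup.iff_card.1 hLp
    have hjn : n < j := by
      by_contra h
      exact hnot (pnil_of_small hp hcop hP hi hL hj (by omega) hRL)
    have hmono : ∀ X : Subgroup G, X.Normal → X ≠ ⊥ → L ≤ X := by
      intro X hX hX0
      by_cases hXL : X ⊓ L = ⊥
      · exfalso
        have h1 : X ⊓ opp p G = ⊥ := by
          apply hp' _ inferInstance
          apply not_dvd_of_inf_eq_bot hp hP hi inferInstance
          rw [eq_bot_iff, ← hXL]
          intro x hx
          exact Subgroup.mem_inf.2 ⟨hx.2.1, hRL (Subgroup.mem_inf.2 ⟨hx.1, hx.2.2⟩)⟩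
        have hXp : IsPGroup p X := by
          obtain ⟨k, hk⟩ := opp_index hp G
          rintro ⟨x, hx⟩
          refine ⟨k, ?_⟩
          ext
          have : x ^ (p ^ k) ∈ X ⊓ opp p G :=
            Subgroup.mem_inf.2 ⟨pow_mem hx _, hk ▸ (opp p G).pow_index_mem x⟩
          rw [h1, Subgroup.mem_bot] at this
          simpa using this
        have h2 := hpR X hX (normal_p_le hp hP hi hX hXp) hX0
        apply hR
        rw [eq_bot_iff, ← hXL]
        exact le_inf h2 hRL
      · have := hmin (X ⊓ L) inferInstance inf_le_right hXL
        exact inf_eq_right.1 this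
    have hexp := min_normal_exp hp hL hLp hL1 hmin
    have hA : ∀ g : G, ∀ a ∈ M ⊓ L, g * a * g⁻¹ ∈ M ⊓ L := by
      have hAq : ∀ (q k : ℕ) (g : G), q.Prime → q ≠ p → g ^ (q ^ k) = 1 →
          ∀ a ∈ M ⊓ L, g * a * g⁻¹ ∈ M ⊓ L := by
        intro q k g hq1 hqp hg a ha
        by_cases ha1 : a = 1
        · subst ha1; simp [one_mem]
        obtain ⟨H, hHM, haH, hHc⟩ := exH a ha.1 (hexp a ha.2)
        obtain ⟨T, hT, hs, hx⟩ := hUs H hHM hHc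
        by_cases hT0 : T = ⊥
        · rw [hT0, sup_bot_eq] at hs
          have hHp : IsPGroup p H := hP.to_le (hHM.trans hMP)
          exact Subgroup.mem_inf.2 ⟨hHM (sperm_norm hp hP hi hHp hs hq1 hqp hg a haH),
            hL.conj_mem a ha.2 g⟩
        · exfalso
          have haT : a ∈ T := hmono T hT hT0 ha.2
          have haU := mem_uhyp_of_core (hcore H hHM) (hx a (Subgroup.mem_inf.2 ⟨haH, haT⟩))
          obtain ⟨L', hL', hL'0, hmin', hpr⟩ := uhyp_prime haU ha1
          have : L = L' := hmin' L hL (hmono L' hL' hL'0) hL1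
          rw [← this, hj] at hpr
          have := (Nat.Prime.eq_one_of_pow hpr)
          omega
      let S : Subgroup G := Subgroup.normalizer ((M ⊓ L : Subgroup G) : Set G)
      have hS : ∀ g : G, (∀ a ∈ M ⊓ L, g * a * g⁻¹ ∈ M ⊓ L) →
          (∀ a ∈ M ⊓ L, g⁻¹ * a * g⁻¹⁻¹ ∈ M ⊓ L) → g ∈ S := by
        intro g h1 h2
        rw [Subgroup.mem_normalizer_iff]
        intro a
        refine ⟨h1 a, fun h => ?_⟩
        have := h2 _ h
        have e : g⁻¹ * (g * a * g⁻¹) * g⁻¹⁻¹ = a := by group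
        rwa [e] at this
      have hPS : P ≤ S := by
        have : ∀ g ∈ P, ∀ a ∈ M ⊓ L, g * a * g⁻¹ ∈ M ⊓ L := fun g hg a ha =>
          Subgroup.mem_inf.2 ⟨hMn g hg a ha.1, hL.conj_mem a ha.2 g⟩
        exact fun g hg => hS g (this g hg) (this _ (inv_mem hg))
      have hOS : opp p G ≤ S := by
        rw [opp, Subgroup.closure_le]
        rintro g ⟨q, k, hq1, hqp, hg⟩
        exact hS g (hAq q k g hq1 hqp hg) (hAq q k g⁻¹ hq1 hqp (by rw [inv_pow, hg, inv_one]))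
      have hST : S = ⊤ := by
        rw [eq_top_iff, ← sup_opp_eq_top hp hi]; exact sup_le hPS hOS
      intro g a ha
      have hg : g ∈ S := by rw [hST]; trivial
      exact (Subgroup.mem_normalizer_iff.1 hg a).1 ha
    have hAN : (M ⊓ L).Normal := ⟨fun a ha g => hA g a ha⟩
    by_cases hA0 : M ⊓ L = ⊥
    · have h1 := card_mul_le hMP hLP hA0
      rw [← hMc] at h1
      have h2 := Nat.le_of_mul_le_mul_left h1 Nat.card_pos
      rw [hj] at h2
      have h3 : p ^ 1 < p ^ j := Nat.pow_lt_pow_right hp.one_lt (by omega)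
      rw [pow_one] at h3
      omega
    · have := hmin _ hAN inf_le_right hA0
      exact hRM (hRL.trans (inf_eq_right.1 this))
  · have hno : ∀ X : Subgroup G, X.Normal → IsPGroup p X → X = ⊥ := by
      intro X hX hXp
      by_contra h0
      exact hex ⟨X, hX, normal_p_le hp hP hi hX hXp, h0⟩
    obtain ⟨H, hHM, -, hHc⟩ := exH 1 (one_mem _) (one_pow _)
    have hHP := hHM.trans hMP
    obtain ⟨T, hT, hs, hx⟩ := hUs H hHM hHc
    have hHT : H ⊓ T = ⊥ := by
      rw [eq_bot_iff]
      intro x hxm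
      rw [Subgroup.mem_bot]
      by_contra hx1
      have hxU := mem_uhyp_of_core (hcore H hHM) (hx x hxm)
      obtain ⟨L, hL, hL0, -, hpr⟩ := uhyp_prime hxU hx1
      by_cases hd : p ∣ Nat.card L
      · have : Nat.card L = p ^ 1 := by rw [pow_one]; exact ((Nat.prime_dvd_prime_iff_eq hp hpr).1 hd).symm
        exact hL0 (hno L hL (IsPGroup.of_card this))
      · exact hL0 (hp' L hL hd)
    obtain ⟨f, hf⟩ := IsPGroup.iff_card.1 (hP.to_le (inf_le_left : P ⊓ T ≤ P))
    have hfn : f ≤ n := by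
      have h1 : H ⊓ (P ⊓ T) = ⊥ := by
        rw [eq_bot_iff, ← hHT]; exact inf_le_inf_left _ inf_le_right
      have h2 := card_mul_le hHP inf_le_left h1
      rw [hHc, hf, hm, ← pow_add] at h2
      have := (Nat.pow_le_pow_iff_right hp.one_lt).1 h2
      omega
    have hTn : IsPNilpotent p T := by
      refine frob (n := n) (m := f) hp ?_ (P := P.subgroupOf T) (hP.comap_subtype) ?_ ?_ hfn
      · exact Nat.Coprime.coprime_dvd_left (Subgroup.card_subgroup_dvd_card T) hcop
      · exact fun hd => hi (hd.trans (relIndex_dvd_idx P T hT))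
      · rw [← hf, ← Subgroup.inf_subgroupOf_right,
          Nat.card_congr (Subgroup.subgroupOfEquivOfLe inf_le_right).toEquiv]
    rw [pnil_iff hp] at hTn
    have hoT : opp p T = ⊥ := by
      have h1 : ((opp p T).map T.subtype).Normal := ConjAct.normal_of_characteristic_of_normal
      have h2 := hp' _ h1 (by rwa [Subgroup.card_map_of_injective T.subtype_injective])
      exact (Subgroup.map_eq_bot_iff_of_injective _ T.subtype_injective).1 h2
    have hTp : IsPGroup p T := by
      obtain ⟨k, hk⟩ := opp_index hp T
      rw [hoT, Subgroup.index_bot] at hk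
      exact IsPGroup.of_card hk
    have hT0 := hno T hT hTp
    rw [hT0, sup_bot_eq] at hs
    have h1 := sperm_le_core hp hP hi (hP.to_le hHP) hs
    have h2 : P.normalCore = ⊥ := hno _ inferInstance (hP.to_le P.normalCore_le)
    rw [h2, le_bot_iff] at h1
    rw [h1, Subgroup.card_bot] at hHc
    have h3 : 1 < p ^ (m - n) := Nat.one_lt_pow (by omega) hp.one_lt
    omega

theorem main_ind {p n : ℕ} (hp : p.Prime) (hn : 1 ≤ n) : ∀ (N : ℕ) {G : Type u} [Group G] [Finite G]
    (_ : Nat.card G < N) (_ : Nat.Coprime (Nat.card G) (∏ i ∈ Finset.Icc 1 n, (p ^ i - 1)))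
    {P : Subgroup G} (_ : IsPGroup p P) (_ : ¬ p ∣ P.index) (_ : HypN p n P), IsPNilpotent p G := by
  intro N
  induction N with
  | zero => intro G _ _ h; omega
  | succ N ih =>
    intro G _ _ hN hcop P hP hi hyp
    refine main_step hp hn hcop hP hi hyp ?_
    intro L hL hL0 hLp
    have hsurj := QuotientGroup.mk'_surjective L
    have hcard : Nat.card L * Nat.card (G ⧸ L) = Nat.card G := by
      rw [← Subgroup.index_eq_card, L.card_mul_index]
    have hlt : Nat.card (G ⧸ L) < Nat.card G := by
      have h1 : 1 < Nat.card L := by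
        have : Nontrivial L := (Subgroup.nontrivial_iff_ne_bot L).2 hL0
        exact Finite.one_lt_card
      have h2 : 0 < Nat.card (G ⧸ L) := Nat.card_pos
      nlinarith
    refine ih (G := G ⧸ L) (by omega) ?_ (P := P.map (QuotientGroup.mk' L)) (hP.map _) ?_ ?_
    · exact Nat.Coprime.coprime_dvd_left ⟨_, by rw [mul_comm, hcard]⟩ hcop
    · exact fun hd => hi (hd.trans (P.index_map_dvd hsurj))
    · exact hyp_quot hp _ hsurj hP (by rwa [QuotientGroup.ker_mk']) hyp

/-- If `gcd(|G|, (p-1)(p²-1)⋯(pⁿ-1)) = 1` for some `n ≥ 1` and `G` has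
a Sylow `p`-subgroup `P` such that every `n`-maximal subgroup of `P` either has a
`p`-nilpotent supplement in `G` or is 𝔘ₛ-quasinormal in `G`, then `G` is `p`-nilpotent. -/
theorem stmt_5 {G : Type*} [Group G] [Finite G] (p n : ℕ) (hp : p.Prime)
    (hpdvd : p ∣ Nat.card G) (hn : 1 ≤ n)
    (hcop : Nat.Coprime (Nat.card G) (∏ i ∈ Finset.Icc 1 n, (p ^ i - 1)))
    (P : Subgroup G) (hP : IsSylowIn p P ⊤)
    (hyp : ∀ H : Subgroup G, IsNMaximalIn n H P →
      HasPNilpotentSupplement p H ∨ UsQuasinormal H) :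
    IsPNilpotent p G := by
  obtain ⟨hP1, hP2⟩ := isSylowIn_iff.1 hP
  exact main_ind hp hn _ (Nat.lt_succ_self _) hcop hP1 hP2
    (fun H hH hc => hyp H (nmax hp hP1 n H hH hc))
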